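/- arXiv:2411.07051 — 7 statements merged into one kernel-verified Lean document; each statement's English description precedes it below -/
import Mathlib

section
/- Let L ⊂ ℝ² be a line that is not parallel to the x-axis and not parallel to the y-axis, and let x ∈ ℝ². Then there exists a unique point x̂ ∈ L such that d_m(x, x̂) ≤ d_m(x, y) for all y ∈ L, where d_m is the maximum metric. -/
open MeasureTheory

/-- The `p`-Wasserstein distance between two measures, defined as the infimum over all
couplings `π` of `μ` and `ν` of `(∬ d(x,y)^p dπ)^(1/p)`. -/
noncomputable def Wdist {X : Type*} [MeasurableSpace X] [PseudoMetricSpace X] (p : ℝ)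
    (μ ν : Measure X) : ℝ :=
  (⨅ π ∈ {π : Measure (X × X) | π.map Prod.fst = μ ∧ π.map Prod.snd = ν},
    (∫⁻ q, edist q.1 q.2 ^ p ∂π) ^ (1 / p)).toReal

/-- The `p`-Wasserstein space over `X`: Borel probability measures on `X` with finite
`p`-th moment. -/
def WSet (X : Type*) [MeasurableSpace X] [PseudoMetricSpace X] (p : ℝ) : Set (Measure X) :=
  {μ | IsProbabilityMeasure μ ∧ ∃ x₀ : X, ∫⁻ x, edist x x₀ ^ p ∂μ < ⊤}

/-- An isometry of the underlying metric space: a distance-preserving bijection. -/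
def IsIsom {X : Type*} [PseudoMetricSpace X] (T : X → X) : Prop :=
  Function.Bijective T ∧ ∀ x y, dist (T x) (T y) = dist x y

/-- An isometry of the `p`-Wasserstein space over `X`: a bijection of the space of
probability measures with finite `p`-th moment preserving the Wasserstein distance. -/
def IsWIsometry (X : Type*) [MeasurableSpace X] [PseudoMetricSpace X] (p : ℝ)
    (Φ : Measure X → Measure X) : Prop :=
  Set.BijOn Φ (WSet X p) (WSet X p) ∧
    ∀ μ ∈ WSet X p, ∀ ν ∈ WSet X p, Wdist p (Φ μ) (Φ ν) = Wdist p μ ν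

/-- The (topological) support of a measure. -/
def msupport {X : Type*} [TopologicalSpace X] [MeasurableSpace X] (μ : Measure X) : Set X :=
  {x | ∀ U : Set X, IsOpen U → x ∈ U → μ U ≠ 0}

def diagLine (ε a : ℝ) : Set (ℝ × ℝ) := {z | z.2 = ε * z.1 + a}

def Lplus : Set (ℝ × ℝ) := {z | z.2 = z.1}

def Lminus : Set (ℝ × ℝ) := {z | z.2 = -z.1}

/-- The closed square `Q = [-1,1]²`. -/
abbrev Qs : Set (ℝ × ℝ) := Set.Icc (-1, -1) (1, 1)

def LplusQ : Set ↥Qs := {q | (q : ℝ × ℝ).2 = (q : ℝ × ℝ).1}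

def LminusQ : Set ↥Qs := {q | (q : ℝ × ℝ).2 = -(q : ℝ × ℝ).1}


/-- The line through `w` with direction `v`. -/
def lineThrough (w v : ℝ × ℝ) : Set (ℝ × ℝ) := {z | ∃ t : ℝ, z = w + t • v}

theorem aux_max_lt (p q α β : ℝ) (hp : 0 < p) (hq : 0 < q) :
    ∃ s : ℝ, ∀ t : ℝ, t ≠ s →
      max (p * |s - α|) (q * |s - β|) < max (p * |t - α|) (q * |t - β|) := by
  refine ⟨(p * α + q * β) / (p + q), fun t ht => ?_⟩
  generalize hs : (p * α + q * β) / (p + q) = s at ht ⊢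
  have hpq : 0 < p + q := by positivity
  have h : p * (s - α) = q * (β - s) := by
    rw [div_eq_iff hpq.ne'] at hs
    linarith
  have habs : p * |s - α| = q * |s - β| := by
    rw [abs_sub_comm s β, ← abs_of_pos hp, ← abs_of_pos hq, ← abs_mul, ← abs_mul, h]
  rw [← habs, max_self, lt_max_iff]
  rcases le_total α s with h1 | h1
  · rcases lt_or_gt_of_ne ht with h2 | h2
    · right
      have h3 : 0 ≤ β - s := by
        by_contra hc
        push Not at hc
        nlinarith
      rw [habs, abs_sub_comm s, abs_sub_comm t]
      apply mul_lt_mul_of_pos_left _ hq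
      rw [abs_of_nonneg h3, abs_of_nonneg (by linarith)]
      linarith
    · left
      apply mul_lt_mul_of_pos_left _ hp
      rw [abs_of_nonneg (by linarith), abs_of_nonneg (by linarith)]
      linarith
  · rcases lt_or_gt_of_ne ht with h2 | h2
    · left
      apply mul_lt_mul_of_pos_left _ hp
      rw [abs_of_nonpos (by linarith), abs_of_nonpos (by linarith)]
      linarith
    · right
      have h3 : β - s ≤ 0 := by
        by_contra hc
        push Not at hc
        nlinarith
      rw [habs]
      apply mul_lt_mul_of_pos_left _ hq
      rw [abs_of_nonneg (by linarith), abs_of_nonneg (by linarith)]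
      linarith

/-- For a line `L ⊂ ℝ²` not parallel to either coordinate axis and any `x ∈ ℝ²`,
there is a unique nearest point of `L` to `x` in the maximum metric. -/
theorem unique_nearest_point_on_line (w v : ℝ × ℝ) (hv1 : v.1 ≠ 0) (hv2 : v.2 ≠ 0)
    (x : ℝ × ℝ) :
    ∃! xhat : ℝ × ℝ, xhat ∈ lineThrough w v ∧
      ∀ y ∈ lineThrough w v, dist x xhat ≤ dist x y := by
  have hd : ∀ t : ℝ, dist x (w + t • v) =
      max (|v.1| * |t - (x.1 - w.1) / v.1|) (|v.2| * |t - (x.2 - w.2) / v.2|) := by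
    intro t
    rw [Prod.dist_eq, Real.dist_eq, Real.dist_eq, ← abs_mul, ← abs_mul, mul_sub, mul_sub,
      mul_div_cancel₀ _ hv1, mul_div_cancel₀ _ hv2, abs_sub_comm x.1, abs_sub_comm x.2]
    simp only [Prod.fst_add, Prod.snd_add, Prod.smul_fst, Prod.smul_snd, smul_eq_mul]
    congr 2 <;> ring
  obtain ⟨s, hs⟩ := aux_max_lt |v.1| |v.2| ((x.1 - w.1) / v.1) ((x.2 - w.2) / v.2)
    (abs_pos.mpr hv1) (abs_pos.mpr hv2)
  refine ⟨w + s • v, ⟨⟨s, rfl⟩, ?_⟩, ?_⟩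
  · rintro y ⟨t, rfl⟩
    by_cases hts : t = s
    · rw [hts]
    · rw [hd, hd]
      exact (hs t hts).le
  · rintro y ⟨⟨t, rfl⟩, hy⟩
    by_cases hts : t = s
    · rw [hts]
    · exfalso
      have h1 := hy _ ⟨s, rfl⟩
      rw [hd, hd] at h1
      exact absurd (hs t hts) (not_lt.mpr h1)
end

section
/- Let p ≥ 1, let L ⊂ ℝ² be a line not parallel to either coordinate axis, and let P_L : ℝ² → L be the nearest-point projection onto L with respect to the maximum metric d_m. For every μ ∈ 𝒲_p(ℝ²), the push-forward μ̂ = (P_L)_#μ is the unique measure in 𝒲_p(L) = {ν ∈ 𝒲_p(ℝ²) : supp(ν) ⊆ L} satisfying d_{W_p}(μ, μ̂) ≤ d_{W_p}(μ, ν) for all ν ∈ 𝒲_p(L). -/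
open MeasureTheory

open scoped ENNReal

lemma aux_abs (δ a b r : ℝ) (ha : 0 ≤ a) (hb : 0 ≤ b) :
    |δ| + min a b * |r| ≤ max |δ + r * a| |-δ + r * b| := by
  have h1 : min a b ≤ a := min_le_left _ _
  have h2 : min a b ≤ b := min_le_right _ _
  have h3 : 0 ≤ min a b := le_min ha hb
  rw [le_max_iff]
  rcases le_total 0 δ with hδ | hδ <;> rcases le_total 0 r with hr | hr
  · left
    rw [abs_of_nonneg hδ, abs_of_nonneg hr]
    refine le_trans ?_ (le_abs_self _)
    nlinarith
  · right
    rw [abs_of_nonneg hδ, abs_of_nonpos hr]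
    refine le_trans ?_ (neg_le_abs _)
    nlinarith
  · right
    rw [abs_of_nonpos hδ, abs_of_nonneg hr]
    refine le_trans ?_ (le_abs_self _)
    nlinarith
  · left
    rw [abs_of_nonpos hδ, abs_of_nonpos hr]
    refine le_trans ?_ (neg_le_abs _)
    nlinarith

/-- the nearest-point parameter -/
noncomputable def auxT (w v x : ℝ × ℝ) : ℝ :=
  (SignType.sign v.1 * (x.1 - w.1) + SignType.sign v.2 * (x.2 - w.2)) / (|v.1| + |v.2|)

noncomputable def auxQ (w v x : ℝ × ℝ) : ℝ × ℝ := w + auxT w v x • v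

lemma abs_sign_mul {a : ℝ} (ha : a ≠ 0) (b : ℝ) : |((SignType.sign a : SignType) : ℝ) * b| = |b| := by
  rcases lt_or_gt_of_ne ha with h | h <;> simp [h]

lemma auxQ_dist (w v : ℝ × ℝ) (hv1 : v.1 ≠ 0) (hv2 : v.2 ≠ 0) (x : ℝ × ℝ) (r : ℝ) :
    dist x (auxQ w v x) + min |v.1| |v.2| * |auxT w v x - r| ≤ dist x (w + r • v) := by
  set t := auxT w v x with ht
  have hpos : 0 < |v.1| + |v.2| := by positivity
  have e1 := sign_mul_self v.1
  have e2 := sign_mul_self v.2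
  set s1 : ℝ := ((SignType.sign v.1 : SignType) : ℝ) with hs1
  set s2 : ℝ := ((SignType.sign v.2 : SignType) : ℝ) with hs2
  have htt : t * (|v.1| + |v.2|) = s1 * (x.1 - w.1) + s2 * (x.2 - w.2) := by
    rw [ht, auxT, div_mul_cancel₀ _ hpos.ne']
  have gen : ∀ r : ℝ, dist x (w + r • v) =
      max (abs (s1 * (x.1 - w.1) - r * abs v.1)) (abs (s2 * (x.2 - w.2) - r * abs v.2)) := by
    intro r
    rw [Prod.dist_eq, Real.dist_eq, Real.dist_eq, ← e1, ← e2,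
      ← abs_sign_mul hv1 (x.1 - _), ← abs_sign_mul hv2 (x.2 - _), ← hs1, ← hs2]
    congr 2
    · simp; ring
    · simp; ring
  have h0 : dist x (auxQ w v x) = abs (s1 * (x.1 - w.1) - t * abs v.1) := by
    rw [auxQ, ← ht, gen]
    have : s2 * (x.2 - w.2) - t * |v.2| = -(s1 * (x.1 - w.1) - t * |v.1|) := by linarith
    rw [this, abs_neg, max_self]
  rw [h0, gen]
  refine (aux_abs _ _ _ _ (abs_nonneg v.1) (abs_nonneg v.2)).trans (le_of_eq ?_)
  congr 2
  · ring
  · linarith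

lemma aux_dist_line (w v : ℝ × ℝ) (t r : ℝ) :
    dist (w + t • v) (w + r • v) = max |v.1| |v.2| * |t - r| := by
  rw [dist_add_left, dist_eq_norm, ← sub_smul, norm_smul, Prod.norm_def]
  simp only [Real.norm_eq_abs]; ring

lemma aux_sharp (w v : ℝ × ℝ) (hv1 : v.1 ≠ 0) (hv2 : v.2 ≠ 0) :
    ∃ κ : ℝ, 0 < κ ∧ ∀ x, ∀ y ∈ lineThrough w v,
      dist x (auxQ w v x) + κ * dist (auxQ w v x) y ≤ dist x y := by
  have h1 : 0 < |v.1| := abs_pos.2 hv1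
  have h2 : 0 < |v.2| := abs_pos.2 hv2
  have hM : 0 < max |v.1| |v.2| := lt_max_of_lt_left h1
  refine ⟨min |v.1| |v.2| / max |v.1| |v.2|, div_pos (lt_min h1 h2) hM, ?_⟩
  rintro x y ⟨r, rfl⟩
  refine le_trans (le_of_eq ?_) (auxQ_dist w v hv1 hv2 x r)
  rw [auxQ, aux_dist_line, ← mul_assoc, div_mul_cancel₀ _ hM.ne']

lemma auxQ_cont (w v : ℝ × ℝ) : Continuous (auxQ w v) := by
  unfold auxQ auxT
  fun_prop

lemma aux_closed (w v : ℝ × ℝ) (hv1 : v.1 ≠ 0) : IsClosed (lineThrough w v) := by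
  have : lineThrough w v = {z | v.2 * (z.1 - w.1) = v.1 * (z.2 - w.2)} := by
    ext z
    constructor
    · rintro ⟨t, rfl⟩
      simp; ring
    · intro h
      refine ⟨(z.1 - w.1) / v.1, ?_⟩
      simp only [Set.mem_ofPred_eq] at h
      ext
      · simp; field_simp; ring
      · simp; field_simp; linarith
  rw [this]
  exact isClosed_eq (by fun_prop) (by fun_prop)

lemma aux_null {ν : Measure (ℝ × ℝ)} {L : Set (ℝ × ℝ)} (h : msupport ν ⊆ L) : ν Lᶜ = 0 := by
  refine measure_null_of_locally_null _ fun x hx => ?_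
  have : x ∉ msupport ν := fun h' => hx (h h')
  simp only [msupport, Set.mem_ofPred_eq, not_forall, not_not] at this
  obtain ⟨U, hU, hxU, h0⟩ := this
  exact ⟨U, mem_nhdsWithin_of_mem_nhds (hU.mem_nhds hxU), h0⟩

lemma aux_triangle {X : Type*} [PseudoMetricSpace X] {p : ℝ} (hp : 1 ≤ p) (x y z : X) :
    edist x z ^ p ≤ 2 ^ (p - 1) * (edist x y ^ p + edist y z ^ p) :=
  (ENNReal.rpow_le_rpow (edist_triangle x y z) (by linarith)).trans
    (ENNReal.rpow_add_le_mul_rpow_add_rpow _ _ hp)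

lemma aux_const_ne_top (p : ℝ) : (2 : ℝ≥0∞) ^ (p - 1) ≠ ⊤ :=
  ENNReal.rpow_ne_top_of_ne_zero (by simp) (by simp)

lemma aux_moment {p : ℝ} (hp : 1 ≤ p) {μ : Measure (ℝ × ℝ)} (hμ : μ ∈ WSet (ℝ × ℝ) p)
    (x : ℝ × ℝ) : ∫⁻ z, edist z x ^ p ∂μ < ⊤ := by
  obtain ⟨hprob, x₀, h⟩ := hμ
  calc ∫⁻ z, edist z x ^ p ∂μ ≤ ∫⁻ z, 2 ^ (p - 1) * (edist z x₀ ^ p + edist x₀ x ^ p) ∂μ :=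
        lintegral_mono fun z => aux_triangle hp z x₀ x
    _ = 2 ^ (p - 1) * (∫⁻ z, edist z x₀ ^ p ∂μ + edist x₀ x ^ p) := by
        rw [lintegral_const_mul' _ _ (aux_const_ne_top p), lintegral_add_right _ measurable_const]
        simp
    _ < ⊤ := by
        refine ENNReal.mul_lt_top (aux_const_ne_top p).lt_top (ENNReal.add_lt_top.2 ⟨h, ?_⟩)
        exact ENNReal.rpow_lt_top_of_nonneg (by linarith) (edist_ne_top _ _)

lemma aux_fin {p : ℝ} (hp : 1 ≤ p) {μ ν : Measure (ℝ × ℝ)} (hμ : μ ∈ WSet (ℝ × ℝ) p)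
    (hν : ν ∈ WSet (ℝ × ℝ) p) :
    (⨅ π ∈ {π : Measure ((ℝ × ℝ) × (ℝ × ℝ)) | π.map Prod.fst = μ ∧ π.map Prod.snd = ν},
    (∫⁻ q, edist q.1 q.2 ^ p ∂π) ^ (1 / p)) ≠ ⊤ := by
  have i1 := hμ.1
  have i2 := hν.1
  have m1 := aux_moment hp hμ 0
  have m2 := aux_moment hp hν 0
  have hm : Measurable fun z : ℝ × ℝ => edist z 0 ^ p := by fun_prop
  refine ne_top_of_le_ne_top ?_ (iInf₂_le (μ.prod ν) ?_)
  · refine ENNReal.rpow_ne_top_of_nonneg (by positivity) (ne_of_lt ?_)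
    calc ∫⁻ q, edist q.1 q.2 ^ p ∂(μ.prod ν)
        ≤ ∫⁻ q, 2 ^ (p - 1) * (edist q.1 0 ^ p + edist q.2 0 ^ p) ∂(μ.prod ν) :=
          lintegral_mono fun q => by
            have := aux_triangle hp q.1 0 q.2
            rwa [edist_comm 0 q.2] at this
      _ = 2 ^ (p - 1) * (∫⁻ z, edist z 0 ^ p ∂μ + ∫⁻ z, edist z 0 ^ p ∂ν) := by
          rw [lintegral_const_mul' _ _ (aux_const_ne_top p),
            lintegral_add_left (by fun_prop)]
          congr 2
          · rw [← lintegral_map (μ := μ.prod ν) hm measurable_fst]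
            simp
          · rw [← lintegral_map (μ := μ.prod ν) hm measurable_snd]
            simp
      _ < ⊤ := ENNReal.mul_lt_top (aux_const_ne_top p).lt_top (ENNReal.add_lt_top.2 ⟨m1, m2⟩)
  · simp

/-- If couplings with arbitrarily small cost exist, then measures of closed sets compare. -/
lemma aux_le_closed {p : ℝ} (hp : 1 ≤ p) {μ ν : Measure (ℝ × ℝ)} [IsFiniteMeasure ν]
    (h : ∀ ε : ℝ≥0∞, ε ≠ 0 → ∃ π : Measure ((ℝ × ℝ) × (ℝ × ℝ)), π.map Prod.fst = μ ∧
      π.map Prod.snd = ν ∧ ∫⁻ q, edist q.1 q.2 ^ p ∂π ≤ ε) {F : Set (ℝ × ℝ)} (hF : IsClosed F) :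
    μ F ≤ ν F := by
  have key : ∀ δ : ℝ, 0 < δ → μ F ≤ ν (Metric.cthickening δ F) := by
    intro δ hδ
    have hc0 : ENNReal.ofReal δ ^ p ≠ 0 := by
      simp [ENNReal.rpow_eq_zero_iff, hδ]
    have hct : ENNReal.ofReal δ ^ p ≠ ⊤ :=
      ENNReal.rpow_ne_top_of_nonneg (by linarith) (by simp)
    refine le_of_forall_pos_le_add fun η hη => ?_
    obtain ⟨π, h1, h2, h3⟩ := h (ENNReal.ofReal δ ^ p * η) (mul_ne_zero hc0 hη.ne')
    have hm : Measurable fun q : (ℝ × ℝ) × (ℝ × ℝ) => edist q.1 q.2 ^ p := by fun_prop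
    have hmk := mul_meas_ge_le_lintegral (μ := π) hm (ENNReal.ofReal δ ^ p)
    have hmk' : π {q | ENNReal.ofReal δ ^ p ≤ edist q.1 q.2 ^ p} ≤ η :=
      (ENNReal.mul_le_mul_iff_right hc0 hct).1 (hmk.trans h3)
    calc μ F = π (Prod.fst ⁻¹' F) := by
          rw [← h1, Measure.map_apply measurable_fst hF.measurableSet]
      _ ≤ π (Prod.snd ⁻¹' (Metric.cthickening δ F) ∪
            {q | ENNReal.ofReal δ ^ p ≤ edist q.1 q.2 ^ p}) := by
          refine measure_mono fun q hq => ?_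
          rcases le_total (edist q.1 q.2) (ENNReal.ofReal δ) with hh | hh
          · left
            refine Metric.mem_cthickening_of_edist_le q.2 q.1 δ F hq ?_
            rwa [edist_comm]
          · right
            exact ENNReal.rpow_le_rpow hh (by linarith)
      _ ≤ _ := measure_union_le _ _
      _ ≤ ν (Metric.cthickening δ F) + η := by
          gcongr
          rw [← h2, Measure.map_apply measurable_snd Metric.isClosed_cthickening.measurableSet]
  have ht := tendsto_measure_cthickening_of_isClosed (μ := ν) (s := F)
    ⟨1, one_pos, measure_ne_top _ _⟩ hF
  refine ge_of_tendsto (ht.mono_left nhdsWithin_le_nhds :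
    Filter.Tendsto _ (nhdsWithin (0 : ℝ) (Set.Ioi 0)) _) ?_
  filter_upwards [self_mem_nhdsWithin] with δ hδ using key δ hδ

lemma aux_eq {p : ℝ} (hp : 1 ≤ p) {μ ν : Measure (ℝ × ℝ)} [IsProbabilityMeasure μ]
    [IsProbabilityMeasure ν]
    (h : ∀ ε : ℝ≥0∞, ε ≠ 0 → ∃ π : Measure ((ℝ × ℝ) × (ℝ × ℝ)), π.map Prod.fst = μ ∧
      π.map Prod.snd = ν ∧ ∫⁻ q, edist q.1 q.2 ^ p ∂π ≤ ε) : μ = ν := by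
  have h' : ∀ ε : ℝ≥0∞, ε ≠ 0 → ∃ π : Measure ((ℝ × ℝ) × (ℝ × ℝ)), π.map Prod.fst = ν ∧
      π.map Prod.snd = μ ∧ ∫⁻ q, edist q.1 q.2 ^ p ∂π ≤ ε := by
    intro ε hε
    obtain ⟨π, h1, h2, h3⟩ := h ε hε
    refine ⟨π.map Prod.swap, ?_, ?_, ?_⟩
    · rw [Measure.map_map measurable_fst measurable_swap]; exact h2
    · rw [Measure.map_map measurable_snd measurable_swap]; exact h1
    · rw [lintegral_map (by fun_prop) measurable_swap]
      simpa [edist_comm] using h3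
  have hcl : ∀ F : Set (ℝ × ℝ), IsClosed F → μ F = ν F := fun F hF =>
    le_antisymm (aux_le_closed hp h hF) (aux_le_closed hp h' hF)
  refine ext_of_generate_finite _ (BorelSpace.measurable_eq.trans borel_eq_generateFrom_isClosed)
    isPiSystem_isClosed (fun F hF => hcl F hF) (by simp)

/-- For a line `L` not parallel to either coordinate axis with nearest-point projection
`P`, the push-forward `μ̂ = P_#μ` is the unique measure supported on `L` minimizing the
`p`-Wasserstein distance to `μ`. -/
theorem pushforward_is_metric_projection (p : ℝ) (hp : 1 ≤ p) (w v : ℝ × ℝ)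
    (hv1 : v.1 ≠ 0) (hv2 : v.2 ≠ 0) (P : ℝ × ℝ → ℝ × ℝ)
    (hP : ∀ x : ℝ × ℝ, P x ∈ lineThrough w v ∧
      ∀ y ∈ lineThrough w v, dist x (P x) ≤ dist x y)
    (μ : Measure (ℝ × ℝ)) (hμ : μ ∈ WSet (ℝ × ℝ) p) :
    μ.map P ∈ WSet (ℝ × ℝ) p ∧ msupport (μ.map P) ⊆ lineThrough w v ∧
    (∀ ν ∈ WSet (ℝ × ℝ) p, msupport ν ⊆ lineThrough w v →
      Wdist p μ (μ.map P) ≤ Wdist p μ ν) ∧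
    (∀ ν ∈ WSet (ℝ × ℝ) p, msupport ν ⊆ lineThrough w v →
      (∀ ξ ∈ WSet (ℝ × ℝ) p, msupport ξ ⊆ lineThrough w v → Wdist p μ ν ≤ Wdist p μ ξ) →
      ν = μ.map P) := by
  have hp0 : 0 < p := by linarith
  obtain ⟨κ, hκ, hsharp⟩ := aux_sharp w v hv1 hv2
  have hPQ : P = auxQ w v := by
    funext x
    have h1 := hsharp x (P x) (hP x).1
    have h2 := (hP x).2 (auxQ w v x) ⟨_, rfl⟩
    have h3 : κ * dist (auxQ w v x) (P x) ≤ 0 := by linarith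
    have h4 : dist (auxQ w v x) (P x) ≤ 0 := by
      by_contra hc
      push Not at hc
      have := mul_pos hκ hc
      linarith
    exact (dist_le_zero.1 h4).symm
  rw [← hPQ] at hsharp
  have hPm : Measurable P := hPQ ▸ (auxQ_cont w v).measurable
  have hprob := hμ.1
  have hprob' : IsProbabilityMeasure (μ.map P) := Measure.isProbabilityMeasure_map hPm.aemeasurable
  set k : ENNReal := ENNReal.ofReal κ with hk
  have hk0 : k ^ p ≠ 0 := by simp [hk, ENNReal.rpow_eq_zero_iff, hκ]
  have hkt : k ^ p ≠ ⊤ := ENNReal.rpow_ne_top_of_nonneg hp0.le (by simp [hk])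
  have hE : ∀ x, ∀ y ∈ lineThrough w v,
      edist x (P x) ^ p + k ^ p * edist (P x) y ^ p ≤ edist x y ^ p := by
    intro x y hy
    rw [← ENNReal.mul_rpow_of_nonneg _ _ hp0.le]
    refine (ENNReal.add_rpow_le_rpow_add _ _ hp).trans (ENNReal.rpow_le_rpow ?_ hp0.le)
    rw [edist_dist, edist_dist, edist_dist, hk, ← ENNReal.ofReal_mul hκ.le,
      ← ENNReal.ofReal_add dist_nonneg (by positivity)]
    exact ENNReal.ofReal_le_ofReal (hsharp x y hy)
  have hwL : w ∈ lineThrough w v := ⟨0, by simp⟩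
  have hmW : μ.map P ∈ WSet (ℝ × ℝ) p := by
    refine ⟨hprob', w, ?_⟩
    rw [lintegral_map (by fun_prop) hPm]
    have h1 : k ^ p * ∫⁻ x, edist (P x) w ^ p ∂μ < ⊤ := by
      rw [← lintegral_const_mul' _ _ hkt]
      exact (lintegral_mono fun x => le_add_self.trans (hE x w hwL)).trans_lt
        (aux_moment hp hμ w)
    exact ENNReal.lt_top_of_mul_ne_top_right h1.ne hk0
  have hmS : msupport (μ.map P) ⊆ lineThrough w v := by
    intro x hx
    by_contra hxL
    have hcl := aux_closed w v hv1
    refine hx _ hcl.isOpen_compl hxL ?_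
    rw [Measure.map_apply hPm hcl.isOpen_compl.measurableSet]
    have : P ⁻¹' (lineThrough w v)ᶜ = ∅ := by
      ext z
      simpa using (hP z).1
    rw [this, measure_empty]
  set A := ∫⁻ x, edist x (P x) ^ p ∂μ with hA
  have hmA : Measurable fun x => edist x (P x) ^ p := by fun_prop
  have hAt : A < ⊤ :=
    (lintegral_mono fun x => le_self_add.trans (hE x w hwL)).trans_lt (aux_moment hp hμ w)
  -- lower bound for couplings
  have hlow : ∀ ν : Measure (ℝ × ℝ), msupport ν ⊆ lineThrough w v →
      ∀ π : Measure ((ℝ × ℝ) × (ℝ × ℝ)), π.map Prod.fst = μ → π.map Prod.snd = ν →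
      A + k ^ p * ∫⁻ q, edist (P q.1) q.2 ^ p ∂π ≤ ∫⁻ q, edist q.1 q.2 ^ p ∂π := by
    intro ν hν π h1 h2
    have hae : ∀ᵐ q ∂π, q.2 ∈ lineThrough w v := by
      have h0 := aux_null hν
      rw [← h2] at h0
      exact ae_of_ae_map measurable_snd.aemeasurable h0
    have hAπ : A = ∫⁻ q, edist q.1 (P q.1) ^ p ∂π := by
      rw [hA, ← h1, lintegral_map hmA measurable_fst]
    rw [hAπ, ← lintegral_const_mul' _ _ hkt, ← lintegral_add_left (by fun_prop)]
    refine lintegral_mono_ae ?_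
    filter_upwards [hae] with q hq using hE _ _ hq
  have hup : (⨅ π ∈ {π : Measure ((ℝ × ℝ) × (ℝ × ℝ)) | π.map Prod.fst = μ ∧
      π.map Prod.snd = μ.map P}, (∫⁻ q, edist q.1 q.2 ^ p ∂π) ^ (1 / p)) ≤ A ^ (1 / p) := by
    have hm : Measurable fun x => (x, P x) := by fun_prop
    refine (iInf₂_le (μ.map fun x => (x, P x)) ⟨?_, ?_⟩).trans (le_of_eq ?_)
    · rw [lintegral_map (by fun_prop) hm]
    · rw [Measure.map_map measurable_fst hm]; exact Measure.map_id
    · rw [Measure.map_map measurable_snd hm]; rfl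
  refine ⟨hmW, hmS, ?_, ?_⟩
  · intro ν hν hνL
    refine ENNReal.toReal_mono (aux_fin hp hμ hν) (hup.trans (le_iInf₂ fun π hπ => ?_))
    exact ENNReal.rpow_le_rpow (le_self_add.trans (hlow ν hνL π hπ.1 hπ.2)) (by positivity)
  · intro ν hν hνL hmin
    have hνp := hν.1
    have h1 := hmin _ hmW hmS
    have h2 := (ENNReal.toReal_le_toReal (aux_fin hp hμ hν) (aux_fin hp hμ hmW)).1 h1
    have h3 := h2.trans hup
    symm
    refine aux_eq hp fun ε hε => ?_
    have hlt : A ^ (1 / p) < (A + k ^ p * ε) ^ (1 / p) := by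
      refine ENNReal.rpow_lt_rpow ?_ (by positivity)
      exact ENNReal.lt_add_right hAt.ne (mul_ne_zero hk0 hε)
    have h4 := h3.trans_lt hlt
    simp only [iInf_lt_iff] at h4
    obtain ⟨π, hπ, h5⟩ := h4
    have h6 := (ENNReal.rpow_lt_rpow_iff (by positivity)).1 h5
    have h7 := (hlow ν hνL π hπ.1 hπ.2).trans h6.le
    have h8 := (ENNReal.mul_le_mul_iff_right hk0 hkt).1 ((ENNReal.add_le_add_iff_left hAt.ne).1 h7)
    have hm : Measurable fun q : (ℝ × ℝ) × (ℝ × ℝ) => (P q.1, q.2) := by fun_prop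
    refine ⟨π.map fun q => (P q.1, q.2), ?_, ?_, ?_⟩
    · rw [Measure.map_map measurable_fst hm, ← hπ.1, Measure.map_map hPm measurable_fst]; rfl
    · rw [Measure.map_map measurable_snd hm, ← hπ.2]; rfl
    · rw [lintegral_map (by fun_prop) hm]
      exact h8
end

section
/- Let p ≥ 1 and let Φ : 𝒲_p(ℝ²) → 𝒲_p(ℝ²) be an isometry such that Φ(μ) = μ for every μ whose support is contained in L₊ and every μ whose support is contained in L₋. Then Φ((P_{L₊})_#μ) = (P_{L₊})_#(Φ(μ)) and Φ((P_{L₋})_#μ) = (P_{L₋})_#(Φ(μ)) for all μ ∈ 𝒲_p(ℝ²), where P_{L₊}, P_{L₋} are the nearest-point projections onto L₊, L₋ in the maximum metric. -/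
open MeasureTheory

open scoped ENNReal

/-- Transport cost: infimum of the `p`-cost without the root. -/
noncomputable def tcost (p : ℝ) (μ ν : Measure (ℝ × ℝ)) : ℝ≥0∞ :=
  ⨅ π ∈ {π : Measure ((ℝ × ℝ) × (ℝ × ℝ)) | π.map Prod.fst = μ ∧ π.map Prod.snd = ν},
    ∫⁻ q, edist q.1 q.2 ^ p ∂π

lemma Wdist_eq (p : ℝ) (hp : 1 ≤ p) (μ ν : Measure (ℝ × ℝ)) :
    Wdist p μ ν = (tcost p μ ν ^ (1 / p)).toReal := by
  have h : (0 : ℝ) < 1 / p := by positivity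
  unfold Wdist tcost
  congr 1
  have := fun x : ℝ≥0∞ => show ENNReal.orderIsoRpow (1 / p) h x = x ^ (1 / p) from rfl
  simp only [← this, OrderIso.map_iInf]

lemma tcost_le {p : ℝ} {μ ν : Measure (ℝ × ℝ)} (π : Measure ((ℝ × ℝ) × (ℝ × ℝ)))
    (h1 : π.map Prod.fst = μ) (h2 : π.map Prod.snd = ν) :
    tcost p μ ν ≤ ∫⁻ q, edist q.1 q.2 ^ p ∂π :=
  iInf₂_le π ⟨h1, h2⟩

lemma meas_edist (p : ℝ) :
    Measurable (fun q : (ℝ × ℝ) × (ℝ × ℝ) => edist q.1 q.2 ^ p) :=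
  (measurable_fst.edist measurable_snd).pow_const p

lemma moment_all {p : ℝ} (hp : 1 ≤ p) {μ : Measure (ℝ × ℝ)} (hμ : μ ∈ WSet (ℝ × ℝ) p)
    (y : ℝ × ℝ) : ∫⁻ x, edist x y ^ p ∂μ < ⊤ := by
  obtain ⟨h1, x₀, h2⟩ := hμ
  have hp0 : 0 ≤ p := by linarith
  calc ∫⁻ x, edist x y ^ p ∂μ
      ≤ ∫⁻ x, 2 ^ (p - 1) * (edist x x₀ ^ p + edist x₀ y ^ p) ∂μ := by
        refine lintegral_mono fun x => ?_
        exact (ENNReal.rpow_le_rpow (edist_triangle x x₀ y) hp0).trans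
          (ENNReal.rpow_add_le_mul_rpow_add_rpow _ _ hp)
    _ = 2 ^ (p - 1) * (∫⁻ x, edist x x₀ ^ p ∂μ + edist x₀ y ^ p) := by
        rw [lintegral_const_mul' _ _ (by finiteness), lintegral_add_right _ measurable_const]
        simp
    _ < ⊤ := by
        have h3 : edist x₀ y ^ p < ⊤ := ENNReal.rpow_lt_top_of_nonneg hp0 (edist_ne_top _ _)
        exact ENNReal.mul_lt_top (by finiteness) (ENNReal.add_lt_top.2 ⟨h2, h3⟩)

lemma tcost_lt_top {p : ℝ} (hp : 1 ≤ p) {μ ν : Measure (ℝ × ℝ)} (hμ : μ ∈ WSet (ℝ × ℝ) p)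
    (hν : ν ∈ WSet (ℝ × ℝ) p) : tcost p μ ν < ⊤ := by
  have hp0 : 0 ≤ p := by linarith
  have a1 := moment_all hp hμ 0
  have a2 := moment_all hp hν 0
  have := hμ.1
  have := hν.1
  refine (tcost_le (μ.prod ν) (by simp [Measure.map_fst_prod])
    (by simp [Measure.map_snd_prod])).trans_lt ?_
  have m1 : Measurable (fun x : ℝ × ℝ => edist x 0 ^ p) :=
    (measurable_id.edist measurable_const).pow_const p
  calc ∫⁻ q, edist q.1 q.2 ^ p ∂(μ.prod ν)
      ≤ ∫⁻ q, 2 ^ (p - 1) * (edist q.1 0 ^ p + edist q.2 0 ^ p) ∂(μ.prod ν) := by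
        refine lintegral_mono fun q => ?_
        exact (ENNReal.rpow_le_rpow (edist_triangle_right q.1 q.2 0) hp0).trans
          (ENNReal.rpow_add_le_mul_rpow_add_rpow _ _ hp)
    _ = 2 ^ (p - 1) * (∫⁻ x, edist x 0 ^ p ∂μ + ∫⁻ x, edist x 0 ^ p ∂ν) := by
        rw [lintegral_const_mul' _ _ (by finiteness),
          lintegral_add_left (f := fun q : (ℝ × ℝ) × (ℝ × ℝ) => edist q.1 0 ^ p)
            (m1.comp measurable_fst)]
        congr 2
        · rw [← lintegral_map m1 measurable_fst]; simp [Measure.map_fst_prod]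
        · rw [← lintegral_map m1 measurable_snd]; simp [Measure.map_snd_prod]
    _ < ⊤ := ENNReal.mul_lt_top (by finiteness) (ENNReal.add_lt_top.2 ⟨a1, a2⟩)

lemma tcost_eq_of_Wdist {p : ℝ} (hp : 1 ≤ p) {μ ν μ' ν' : Measure (ℝ × ℝ)}
    (h1 : tcost p μ ν < ⊤) (h2 : tcost p μ' ν' < ⊤) (h : Wdist p μ ν = Wdist p μ' ν') :
    tcost p μ ν = tcost p μ' ν' := by
  have h0 : (0 : ℝ) < 1 / p := by positivity
  rw [Wdist_eq p hp, Wdist_eq p hp, ENNReal.toReal_eq_toReal_iff'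
    (ENNReal.rpow_lt_top_of_nonneg h0.le h1.ne).ne
    (ENNReal.rpow_lt_top_of_nonneg h0.le h2.ne).ne] at h
  exact ENNReal.rpow_left_injective h0.ne' h

lemma eq_of_tcost_zero {p : ℝ} (hp : 1 ≤ p) {μ ν : Measure (ℝ × ℝ)} [IsProbabilityMeasure μ]
    [IsProbabilityMeasure ν] (h : tcost p μ ν = 0) : μ = ν := by
  have hp0 : 0 < p := by linarith
  have key : levyProkhorovEDist μ ν = 0 := by
    rw [← nonpos_iff_eq_zero]
    refine levyProkhorovEDist_le_of_forall μ ν 0 fun ε B hε hε' hB => ?_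
    have hεp : ε ^ p ≠ 0 := by simp [hε.ne', hε'.ne]
    have hεp' : ε ^ p ≠ ⊤ := (ENNReal.rpow_lt_top_of_nonneg hp0.le hε'.ne).ne
    have hlt : tcost p μ ν < ε ^ p * ε := by
      rw [h]; exact ENNReal.mul_pos hεp hε.ne'
    simp only [tcost, iInf_lt_iff] at hlt
    obtain ⟨π, ⟨h1, h2⟩, h3⟩ := hlt
    have h4 : π {q | ε ^ p ≤ edist q.1 q.2 ^ p} ≤ ε := by
      have := (mul_meas_ge_le_lintegral (μ := π) (meas_edist p) (ε ^ p)).trans h3.le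
      exact (ENNReal.mul_le_mul_iff_right hεp hεp').1 this
    have hT : MeasurableSet (Metric.thickening ε.toReal B) :=
      Metric.isOpen_thickening.measurableSet
    have hmem : ∀ x y : ℝ × ℝ, y ∈ B → edist x y < ε → x ∈ Metric.thickening ε.toReal B := by
      intro x y hy hxy
      rw [Metric.mem_thickening_iff_infEDist_lt, ENNReal.ofReal_toReal hε'.ne]
      exact (Metric.infEDist_le_edist_of_mem hy).trans_lt hxy
    rw [← h1, ← h2, Measure.map_apply measurable_fst hB, Measure.map_apply measurable_snd hB,
      Measure.map_apply measurable_fst hT, Measure.map_apply measurable_snd hT]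
    constructor
    · refine le_trans ((measure_mono ?_).trans (measure_union_le _ _)) (add_le_add le_rfl h4)
      intro q hq
      by_cases hc : edist q.1 q.2 < ε
      · exact Or.inl (hmem _ _ hq (by rwa [edist_comm]))
      · exact Or.inr (ENNReal.rpow_le_rpow (not_lt.1 hc) hp0.le)
    · refine le_trans ((measure_mono ?_).trans (measure_union_le _ _)) (add_le_add le_rfl h4)
      intro q hq
      by_cases hc : edist q.1 q.2 < ε
      · exact Or.inl (hmem _ _ hq hc)
      · exact Or.inr (ENNReal.rpow_le_rpow (not_lt.1 hc) hp0.le)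
  refine ext_of_generate_finite _ ?_ isPiSystem_isClosed (fun A hA ↦ ?_) (by simp)
  · rw [BorelSpace.measurable_eq (α := ℝ × ℝ), borel_eq_generateFrom_isClosed]
  refine measure_eq_measure_of_levyProkhorovEDist_eq_zero_of_isClosed key hA ?_ ?_
  · exact ⟨1, Real.zero_lt_one, measure_ne_top _ _⟩
  · exact ⟨1, Real.zero_lt_one, measure_ne_top _ _⟩

lemma core_proj (p : ℝ) (hp : 1 ≤ p)
    (Φ : Measure (ℝ × ℝ) → Measure (ℝ × ℝ)) (hΦ : IsWIsometry (ℝ × ℝ) p Φ)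
    (L : Set (ℝ × ℝ)) (hL : IsClosed L)
    (hfix : ∀ μ ∈ WSet (ℝ × ℝ) p, msupport μ ⊆ L → Φ μ = μ)
    (P : ℝ × ℝ → ℝ × ℝ) (hP : Measurable P) (hPL : ∀ x, P x ∈ L)
    (hadd : ∀ x, ∀ y ∈ L, edist x y = edist x (P x) + edist (P x) y)
    (μ : Measure (ℝ × ℝ)) (hμ : μ ∈ WSet (ℝ × ℝ) p) :
    Φ (μ.map P) = (Φ μ).map P := by
  have hp0 : 0 ≤ p := by linarith
  have hmap : ∀ ν ∈ WSet (ℝ × ℝ) p, ν.map P ∈ WSet (ℝ × ℝ) p := by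
    intro ν hν
    have := hν.1
    refine ⟨Measure.isProbabilityMeasure_map hP.aemeasurable, P 0, ?_⟩
    have m1 : Measurable (fun x : ℝ × ℝ => edist x (P 0) ^ p) :=
      (measurable_id.edist measurable_const).pow_const p
    rw [lintegral_map m1 hP]
    refine (lintegral_mono fun x => ?_).trans_lt (moment_all hp hν (P 0))
    refine ENNReal.rpow_le_rpow ?_ hp0
    rw [hadd x _ (hPL 0)]
    exact le_add_self
  have hae : ∀ ν : Measure (ℝ × ℝ), (ν.map P) Lᶜ = 0 := by
    intro ν
    rw [Measure.map_apply hP hL.measurableSet.compl]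
    have : P ⁻¹' Lᶜ = ∅ := by ext x; simp [hPL x]
    simp [this]
  have hfix' : ∀ ν ∈ WSet (ℝ × ℝ) p, Φ (ν.map P) = ν.map P := by
    intro ν hν
    refine hfix _ (hmap ν hν) fun x hx => ?_
    by_contra hxL
    exact hx Lᶜ hL.isOpen_compl hxL (hae ν)
  set c : Measure (ℝ × ℝ) → ℝ≥0∞ := fun ν => ∫⁻ x, edist x (P x) ^ p ∂ν with hc
  have mc : Measurable (fun x => edist x (P x) ^ p) := (measurable_id.edist hP).pow_const p
  have hcfin : ∀ ν ∈ WSet (ℝ × ℝ) p, c ν < ⊤ := by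
    intro ν hν
    refine (lintegral_mono fun x => ?_).trans_lt (moment_all hp hν (P 0))
    refine ENNReal.rpow_le_rpow ?_ hp0
    rw [hadd x _ (hPL 0)]
    exact le_self_add
  have hup : ∀ ν, tcost p ν (ν.map P) ≤ c ν := by
    intro ν
    have mm : Measurable (fun x => (x, P x)) := measurable_id.prodMk hP
    refine (tcost_le (ν.map fun x => (x, P x)) ?_ ?_).trans ?_
    · rw [Measure.map_map measurable_fst mm]; exact Measure.map_id
    · rw [Measure.map_map measurable_snd mm]; rfl
    · rw [lintegral_map (meas_edist p) mm]
  have hlow : ∀ ν ν' : Measure (ℝ × ℝ),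
      tcost p (ν.map P) (ν'.map P) + c ν ≤ tcost p ν (ν'.map P) := by
    intro ν ν'
    refine le_iInf₂ fun π hπ => ?_
    obtain ⟨h1, h2⟩ := hπ
    have mm : Measurable (fun q : (ℝ × ℝ) × (ℝ × ℝ) => (P q.1, q.2)) :=
      (hP.comp measurable_fst).prodMk measurable_snd
    have e1 : tcost p (ν.map P) (ν'.map P) ≤ ∫⁻ q, edist (P q.1) q.2 ^ p ∂π := by
      refine (tcost_le (π.map fun q => (P q.1, q.2)) ?_ ?_).trans ?_
      · rw [Measure.map_map measurable_fst mm, ← h1, Measure.map_map hP measurable_fst]; rfl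
      · rw [Measure.map_map measurable_snd mm, ← h2]; rfl
      · rw [lintegral_map (meas_edist p) mm]
    have e2 : c ν = ∫⁻ q, edist q.1 (P q.1) ^ p ∂π := by
      rw [hc]
      simp only
      rw [← h1, lintegral_map mc measurable_fst]
    have e3 : ∀ᵐ q ∂π, q.2 ∈ L := by
      have := hae ν'
      rw [← h2, Measure.map_apply measurable_snd hL.measurableSet.compl] at this
      exact this
    calc tcost p (ν.map P) (ν'.map P) + c ν
        ≤ ∫⁻ q, edist (P q.1) q.2 ^ p ∂π + ∫⁻ q, edist q.1 (P q.1) ^ p ∂π := by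
          rw [e2]; exact add_le_add e1 le_rfl
      _ = ∫⁻ q, edist (P q.1) q.2 ^ p + edist q.1 (P q.1) ^ p ∂π :=
          (lintegral_add_right _ (mc.comp measurable_fst)).symm
      _ ≤ ∫⁻ q, edist q.1 q.2 ^ p ∂π := by
          refine lintegral_mono_ae ?_
          filter_upwards [e3] with q hq
          rw [hadd q.1 q.2 hq, add_comm (edist q.1 _)]
          exact ENNReal.add_rpow_le_rpow_add _ _ hp
  have hμ' : Φ μ ∈ WSet (ℝ × ℝ) p := hΦ.1.mapsTo hμ
  have hcost : ∀ ν ∈ WSet (ℝ × ℝ) p, tcost p (Φ μ) (ν.map P) = tcost p μ (ν.map P) := by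
    intro ν hν
    have hm := hmap ν hν
    refine tcost_eq_of_Wdist hp (tcost_lt_top hp hμ' hm) (tcost_lt_top hp hμ hm) ?_
    have := hΦ.2 μ hμ _ hm
    rwa [hfix' ν hν] at this
  have i1 : tcost p ((Φ μ).map P) (μ.map P) + c (Φ μ) ≤ c μ :=
    (hlow _ _).trans ((hcost μ hμ).le.trans (hup μ))
  have i2 : c μ ≤ c (Φ μ) :=
    le_add_self.trans ((hlow μ (Φ μ)).trans ((hcost _ hμ').ge.trans (hup (Φ μ))))
  have hz : tcost p ((Φ μ).map P) (μ.map P) = 0 := by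
    have h3 : tcost p ((Φ μ).map P) (μ.map P) + c (Φ μ) ≤ 0 + c (Φ μ) := by
      rw [zero_add]; exact i1.trans i2
    exact nonpos_iff_eq_zero.1 ((ENNReal.add_le_add_iff_right (hcfin _ hμ').ne).1 h3)
  have := (hmap _ hμ).1
  have := (hmap _ hμ').1
  rw [hfix' μ hμ, eq_of_tcost_zero hp hz]

lemma near_aux (a b t : ℝ)
    (h : max |a - t| |b - t| ≤ max |a - (a + b) / 2| |b - (a + b) / 2|) : t = (a + b) / 2 := by
  have e1 : a - (a + b) / 2 = (a - b) / 2 := by ring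
  have e2 : b - (a + b) / 2 = -((a - b) / 2) := by ring
  rw [e1, e2, abs_neg, max_self] at h
  have h1 := abs_le.1 ((le_max_left _ _).trans h)
  have h2 := abs_le.1 ((le_max_right _ _).trans h)
  rcases abs_cases ((a - b) / 2) with ⟨h3, _⟩ | ⟨h3, _⟩ <;> rw [h3] at h1 h2 <;> linarith

lemma sum_aux (a b t : ℝ) : max |a - t| |b - t| =
    max |a - (a + b) / 2| |b - (a + b) / 2| + max |(a + b) / 2 - t| |(a + b) / 2 - t| := by
  have e1 : a - (a + b) / 2 = (a - b) / 2 := by ring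
  have e2 : b - (a + b) / 2 = -((a - b) / 2) := by ring
  rw [e1, e2, abs_neg, max_self, max_self]
  rcases abs_cases ((a - b) / 2) with ⟨h1, _⟩ | ⟨h1, _⟩ <;>
  rcases abs_cases ((a + b) / 2 - t) with ⟨h2, _⟩ | ⟨h2, _⟩ <;>
  rcases abs_cases (a - t) with ⟨h3, _⟩ | ⟨h3, _⟩ <;>
  rcases abs_cases (b - t) with ⟨h4, _⟩ | ⟨h4, _⟩ <;>
  rw [h1, h2, h3, h4] <;>
  rcases max_cases (|a - t|) (|b - t|) with ⟨h5, _⟩ | ⟨h5, _⟩ <;>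
  rw [h3, h4] at h5 <;> rw [h5] <;> linarith

lemma near_aux' (a b t : ℝ)
    (h : max |a - t| |b - -t| ≤ max |a - (a - b) / 2| |b - -((a - b) / 2)|) :
    t = (a - b) / 2 := by
  have h1 := near_aux a (-b) t (by
    rw [← abs_neg (-b - t), ← abs_neg (-b - (a + -b) / 2)]
    convert h using 3 <;> ring_nf)
  rw [h1]; ring

lemma sum_aux' (a b t : ℝ) : max |a - t| |b - -t| =
    max |a - (a - b) / 2| |b - -((a - b) / 2)|
      + max |(a - b) / 2 - t| |-((a - b) / 2) - -t| := by
  have h1 := sum_aux a (-b) t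
  have e1 : |b - -t| = |-b - t| := by rw [← abs_neg]; congr 1; ring
  have e2 : |b - -((a - b) / 2)| = |-b - (a + -b) / 2| := by rw [← abs_neg]; congr 1; ring
  have e3 : |-((a - b) / 2) - -t| = |(a + -b) / 2 - t| := by rw [← abs_neg]; congr 1; ring
  rw [e1, e2, e3, h1, sub_eq_add_neg a b]

lemma edist_add_of_dist {x y z : ℝ × ℝ} (h : dist x z = dist x y + dist y z) :
    edist x z = edist x y + edist y z := by
  rw [edist_dist, edist_dist, edist_dist, h, ENNReal.ofReal_add dist_nonneg dist_nonneg]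

/-- If an isometry of `𝒲_p(ℝ², d_m)` fixes all measures supported on `L₊` and all
measures supported on `L₋`, then it commutes with the push-forwards of the nearest-point
projections onto `L₊` and `L₋`. -/
theorem isometry_commutes_with_projections (p : ℝ) (hp : 1 ≤ p)
    (Φ : Measure (ℝ × ℝ) → Measure (ℝ × ℝ)) (hΦ : IsWIsometry (ℝ × ℝ) p Φ)
    (hfix : ∀ μ ∈ WSet (ℝ × ℝ) p,
      (msupport μ ⊆ Lplus ∨ msupport μ ⊆ Lminus) → Φ μ = μ)
    (Pp Pm : ℝ × ℝ → ℝ × ℝ)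
    (hPp : ∀ x : ℝ × ℝ, Pp x ∈ Lplus ∧ ∀ y ∈ Lplus, dist x (Pp x) ≤ dist x y)
    (hPm : ∀ x : ℝ × ℝ, Pm x ∈ Lminus ∧ ∀ y ∈ Lminus, dist x (Pm x) ≤ dist x y) :
    ∀ μ ∈ WSet (ℝ × ℝ) p,
      Φ (μ.map Pp) = (Φ μ).map Pp ∧ Φ (μ.map Pm) = (Φ μ).map Pm := by
  have fp : ∀ x, Pp x = ((x.1 + x.2) / 2, (x.1 + x.2) / 2) := by
    intro x
    obtain ⟨h1, h2⟩ := hPp x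
    have h3 := h2 ((x.1 + x.2) / 2, (x.1 + x.2) / 2) rfl
    have h1 : (Pp x).2 = (Pp x).1 := h1
    rw [Prod.dist_eq, Prod.dist_eq] at h3
    simp only [Real.dist_eq] at h3
    have h4 := near_aux _ _ _ (h1 ▸ h3)
    ext
    · exact h4
    · rw [h1]; exact h4
  have fm : ∀ x, Pm x = ((x.1 - x.2) / 2, -((x.1 - x.2) / 2)) := by
    intro x
    obtain ⟨h1, h2⟩ := hPm x
    have h3 := h2 ((x.1 - x.2) / 2, -((x.1 - x.2) / 2)) rfl
    have h1 : (Pm x).2 = -(Pm x).1 := h1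
    rw [Prod.dist_eq, Prod.dist_eq] at h3
    simp only [Real.dist_eq] at h3
    rw [h1] at h3
    have h4 := near_aux' _ _ _ h3
    ext
    · exact h4
    · rw [h1, h4]
  intro μ hμ
  constructor
  · refine core_proj p hp Φ hΦ Lplus (isClosed_eq continuous_snd continuous_fst)
      (fun ν hν h => hfix ν hν (Or.inl h)) Pp ?_ (fun x => (hPp x).1) ?_ μ hμ
    · rw [funext fp]; fun_prop
    · intro x y hy
      have hy : y.2 = y.1 := hy
      refine edist_add_of_dist ?_
      rw [fp x, Prod.dist_eq, Prod.dist_eq, Prod.dist_eq]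
      simp only [Real.dist_eq, hy]
      exact sum_aux _ _ _
  · refine core_proj p hp Φ hΦ Lminus (isClosed_eq continuous_snd continuous_fst.neg)
      (fun ν hν h => hfix ν hν (Or.inr h)) Pm ?_ (fun x => (hPm x).1) ?_ μ hμ
    · rw [funext fm]; fun_prop
    · intro x y hy
      have hy : y.2 = -y.1 := hy
      refine edist_add_of_dist ?_
      rw [fm x, Prod.dist_eq, Prod.dist_eq, Prod.dist_eq]
      simp only [Real.dist_eq, hy]
      exact sum_aux' _ _ _
end

section
/- Fix ε ∈ {−1,1} and a ∈ ℝ and let L = L_{ε,a} = {(x₁,x₂) ∈ ℝ² : x₂ = ε x₁ + a}. Define e : ℝ² → ℝ² by e(y₁,y₂) = (−ε, 1) if y₂ ≥ ε y₁ + a and e(y₁,y₂) = (ε, −1) if y₂ < ε y₁ + a. Then for every x ∈ L, every y ∈ ℝ² and every t ≥ 0: d_m(x, y + t·e(y)) = d_m(x, y) + t, and d_m(y, y + t·e(y)) = t. Moreover, for every t ≥ 0 the map y ↦ y + t·e(y) is injective on ℝ². -/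
open MeasureTheory

/-- The allocation of directions associated to the diagonal line `L_{ε,a}`. -/
noncomputable def dirAlloc (ε a : ℝ) (y : ℝ × ℝ) : ℝ × ℝ :=
  if ε * y.1 + a ≤ y.2 then (-ε, 1) else (ε, -1)

/-- Key properties of the allocation of directions of a diagonal line `L_{ε,a}`:
moving from `y` in direction `e(y)` for time `t` increases the max-distance to every
point of the line by exactly `t`, moves `y` exactly distance `t`, and the resulting
map is injective. -/
theorem direction_allocation_properties (ε a : ℝ) (hε : ε = 1 ∨ ε = -1) :
    (∀ x ∈ diagLine ε a, ∀ y : ℝ × ℝ, ∀ t : ℝ, 0 ≤ t →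
      dist x (y + t • dirAlloc ε a y) = dist x y + t ∧
      dist y (y + t • dirAlloc ε a y) = t) ∧
    ∀ t : ℝ, 0 ≤ t → Function.Injective (fun y : ℝ × ℝ => y + t • dirAlloc ε a y) := by
  refine ⟨fun x hx y t ht => ?_, fun t ht => ?_⟩
  · obtain ⟨x1, x2⟩ := x
    obtain ⟨y1, y2⟩ := y
    simp only [diagLine, Set.mem_setOf_eq] at hx
    simp only [dirAlloc]
    rcases hε with rfl | rfl <;> split_ifs with h <;>
      simp only [Prod.dist_eq, Real.dist_eq, Prod.fst_add, Prod.snd_add, Prod.smul_mk,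
        smul_eq_mul] <;> constructor <;> grind
  · rintro ⟨y1, y2⟩ ⟨z1, z2⟩ h
    simp only [dirAlloc] at h
    rcases hε with rfl | rfl <;> split_ifs at h with h1 h2 h2 <;>
      simp only [Prod.mk_add_mk, Prod.smul_mk, smul_eq_mul, Prod.mk.injEq] at h ⊢ <;>
      constructor <;> linarith [h.1, h.2]
end

section
/- Let μ ∈ 𝒲_1(ℝ²). Then the following are equivalent: (i) μ is supported on a diagonal line L_{ε,a} for some ε ∈ {−1,1} and a ∈ ℝ; (ii) for every ν ∈ 𝒲_1(ℝ²) there exists η ∈ 𝒲_1(ℝ²) such that d_{W_1}(μ, ν) = d_{W_1}(ν, η) = (1/2)·d_{W_1}(μ, η). -/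
open MeasureTheory

open scoped ENNReal

namespace DiagAux

/-- Extended Wasserstein-1 cost. -/
noncomputable def EW (μ ν : Measure (ℝ × ℝ)) : ℝ≥0∞ :=
  ⨅ π ∈ {π : Measure ((ℝ × ℝ) × (ℝ × ℝ)) | π.map Prod.fst = μ ∧ π.map Prod.snd = ν},
    ∫⁻ q, edist q.1 q.2 ∂π

lemma Wdist_eq (μ ν : Measure (ℝ × ℝ)) : Wdist 1 μ ν = (EW μ ν).toReal := by
  simp [Wdist, EW]

lemma EW_le {μ ν : Measure (ℝ × ℝ)} (π : Measure ((ℝ × ℝ) × (ℝ × ℝ)))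
    (h1 : π.map Prod.fst = μ) (h2 : π.map Prod.snd = ν) :
    EW μ ν ≤ ∫⁻ q, edist q.1 q.2 ∂π :=
  iInf₂_le π ⟨h1, h2⟩

lemma le_EW {μ ν : Measure (ℝ × ℝ)} {c : ℝ≥0∞}
    (h : ∀ π : Measure ((ℝ × ℝ) × (ℝ × ℝ)), π.map Prod.fst = μ → π.map Prod.snd = ν →
      c ≤ ∫⁻ q, edist q.1 q.2 ∂π) : c ≤ EW μ ν :=
  le_iInf₂ fun π hπ => h π hπ.1 hπ.2

lemma mem_moment {μ : Measure (ℝ × ℝ)} (hμ : μ ∈ WSet (ℝ × ℝ) 1) (y : ℝ × ℝ) :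
    ∫⁻ x, edist x y ∂μ ≠ ⊤ := by
  obtain ⟨hp, x₀, h⟩ := hμ
  simp only [ENNReal.rpow_one] at h
  have : ∫⁻ x, edist x y ∂μ ≤ ∫⁻ x, (edist x x₀ + edist x₀ y) ∂μ :=
    lintegral_mono fun x => edist_triangle _ _ _
  rw [lintegral_add_right _ measurable_const] at this
  refine ne_top_of_le_ne_top ?_ this
  simp [h.ne, edist_ne_top]

lemma EW_ne_top {μ ν : Measure (ℝ × ℝ)} (hμ : μ ∈ WSet (ℝ × ℝ) 1)
    (hν : ν ∈ WSet (ℝ × ℝ) 1) : EW μ ν ≠ ⊤ := by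
  have := hμ.1
  have := hν.1
  have h1 := mem_moment hμ 0
  have h2 := mem_moment hν 0
  refine ne_top_of_le_ne_top ?_ (EW_le (μ.prod ν) (by simp) (by simp))
  have : ∫⁻ q, edist q.1 q.2 ∂(μ.prod ν) ≤
      ∫⁻ q, (edist q.1 0 + edist q.2 0) ∂(μ.prod ν) :=
    lintegral_mono fun q => edist_triangle_right _ _ _
  refine ne_top_of_le_ne_top ?_ this
  rw [lintegral_add_left (by fun_prop),
    lintegral_prod _ (by fun_prop), lintegral_prod _ (by fun_prop)]
  simp [h1, h2, -edist_zero_right]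

lemma fst_lint {μ : Measure (ℝ × ℝ)} {π : Measure ((ℝ × ℝ) × (ℝ × ℝ))}
    (h : π.map Prod.fst = μ) {f : ℝ × ℝ → ℝ≥0∞} (hf : Measurable f) :
    ∫⁻ q, f q.1 ∂π = ∫⁻ x, f x ∂μ := by
  rw [← h, lintegral_map hf measurable_fst]

lemma snd_lint {μ : Measure (ℝ × ℝ)} {π : Measure ((ℝ × ℝ) × (ℝ × ℝ))}
    (h : π.map Prod.snd = μ) {f : ℝ × ℝ → ℝ≥0∞} (hf : Measurable f) :
    ∫⁻ q, f q.2 ∂π = ∫⁻ x, f x ∂μ := by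
  rw [← h, lintegral_map hf measurable_snd]

lemma EW_dirac_right (μ : Measure (ℝ × ℝ)) [IsProbabilityMeasure μ] (y : ℝ × ℝ) :
    EW μ (Measure.dirac y) = ∫⁻ x, edist x y ∂μ := by
  have key : ∀ π : Measure ((ℝ × ℝ) × (ℝ × ℝ)), π.map Prod.fst = μ →
      π.map Prod.snd = Measure.dirac y →
      ∫⁻ x, edist x y ∂μ = ∫⁻ q, edist q.1 q.2 ∂π := by
    intro π h1 h2
    have hae : ∀ᵐ q ∂π, q.2 = y := by
      have : ∀ᵐ z ∂(π.map Prod.snd), z = y := by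
        rw [h2]
        exact (ae_dirac_iff (p := fun z => z = y) (measurableSet_singleton y)).2 rfl
      exact ae_of_ae_map measurable_snd.aemeasurable this
    rw [← fst_lint h1 (f := fun x => edist x y) (by fun_prop)]
    apply lintegral_congr_ae
    filter_upwards [hae] with q hq
    rw [hq]
  apply le_antisymm
  · rw [key (μ.prod (Measure.dirac y)) (by simp) (by simp)]
    exact EW_le _ (by simp) (by simp)
  · exact le_EW fun π h1 h2 => (key π h1 h2).le

lemma EW_dirac_left (μ : Measure (ℝ × ℝ)) [IsProbabilityMeasure μ] (y : ℝ × ℝ) :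
    EW (Measure.dirac y) μ = ∫⁻ x, edist y x ∂μ := by
  have key : ∀ π : Measure ((ℝ × ℝ) × (ℝ × ℝ)), π.map Prod.snd = μ →
      π.map Prod.fst = Measure.dirac y →
      ∫⁻ x, edist y x ∂μ = ∫⁻ q, edist q.1 q.2 ∂π := by
    intro π h1 h2
    have hae : ∀ᵐ q ∂π, q.1 = y := by
      have : ∀ᵐ z ∂(π.map Prod.fst), z = y := by
        rw [h2]
        exact (ae_dirac_iff (p := fun z => z = y) (measurableSet_singleton y)).2 rfl
      exact ae_of_ae_map measurable_fst.aemeasurable this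
    rw [← snd_lint h1 (f := fun x => edist y x) (by fun_prop)]
    apply lintegral_congr_ae
    filter_upwards [hae] with q hq
    rw [hq]
  apply le_antisymm
  · rw [key ((Measure.dirac y).prod μ) (by simp) (by simp)]
    exact EW_le _ (by simp) (by simp)
  · exact le_EW fun π h1 h2 => (key π h2 h1).le

lemma dirac_mem (y : ℝ × ℝ) : Measure.dirac y ∈ WSet (ℝ × ℝ) 1 := by
  refine ⟨inferInstance, y, ?_⟩
  rw [lintegral_dirac]
  simp

/-! Geometry for the converse direction -/

lemma dist_eq (x y : ℝ × ℝ) : dist x y = max |x.1 - y.1| |x.2 - y.2| := by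
  rw [Prod.dist_eq, Real.dist_eq, Real.dist_eq]

lemma geo_pp {v1 v2 w1 w2 : ℝ} (h1 : 0 ≤ w1) (h2 : 0 ≤ w2) (hw : w1 ≠ 0 ∨ w2 ≠ 0)
    (h : max |v1| |v2| + max |w1| |w2| ≤ max |v1 - w1| |v2 - w2|) : v1 + v2 ≤ 0 := by
  have a1 := le_max_left |v1| |v2|
  have a2 := le_max_right |v1| |v2|
  have b1 := le_max_left |w1| |w2|
  have b2 := le_max_right |w1| |w2|
  have hpos : 0 < max |w1| |w2| := by
    rcases hw with hw | hw
    · exact lt_max_of_lt_left (abs_pos.2 hw)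
    · exact lt_max_of_lt_right (abs_pos.2 hw)
  rw [abs_of_nonneg h1] at *
  rw [abs_of_nonneg h2] at *
  have c1 := le_abs_self v1
  have c2 := le_abs_self v2
  have c3 := neg_abs_le v1
  have c4 := neg_abs_le v2
  rcases le_max_iff.1 h with h | h
  · rcases le_abs.1 h with h | h <;> linarith
  · rcases le_abs.1 h with h | h <;> linarith

lemma geo {y z : ℝ × ℝ} (hz : z ≠ y) :
    ((∀ x, dist x y + dist y z ≤ dist x z → x.1 + x.2 ≤ y.1 + y.2) ∨
     (∀ x, dist x y + dist y z ≤ dist x z → y.1 + y.2 ≤ x.1 + x.2)) ∨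
    ((∀ x, dist x y + dist y z ≤ dist x z → x.1 - x.2 ≤ y.1 - y.2) ∨
     (∀ x, dist x y + dist y z ≤ dist x z → y.1 - y.2 ≤ x.1 - x.2)) := by
  have hw : z.1 - y.1 ≠ 0 ∨ z.2 - y.2 ≠ 0 := by
    by_contra! hh
    exact hz (Prod.ext (by linarith [hh.1]) (by linarith [hh.2]))
  have hw1 : ∀ a : ℝ, a ≠ 0 → -a ≠ 0 := fun a => neg_ne_zero.2
  have conv : ∀ x : ℝ × ℝ, dist x y + dist y z ≤ dist x z →
      max |x.1 - y.1| |x.2 - y.2| + max |z.1 - y.1| |z.2 - y.2| ≤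
        max |(x.1 - y.1) - (z.1 - y.1)| |(x.2 - y.2) - (z.2 - y.2)| := by
    intro x h
    rw [dist_comm y z, dist_eq, dist_eq, dist_eq] at h
    simpa using h
  have flip : ∀ a b : ℝ, |(-a) - (-b)| = |a - b| := fun a b => by
    rw [← abs_neg]; congr 1; ring
  rcases le_total 0 (z.1 - y.1) with h1 | h1 <;> rcases le_total 0 (z.2 - y.2) with h2 | h2
  · left; left; intro x h
    have := geo_pp h1 h2 hw (conv x h)
    linarith
  · right; left; intro x h
    have := geo_pp (v1 := x.1 - y.1) (v2 := -(x.2 - y.2)) (w2 := -(z.2 - y.2)) h1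
      (by linarith) (hw.imp id (hw1 _)) (by rw [abs_neg, abs_neg, flip]; exact conv x h)
    linarith
  · right; right; intro x h
    have := geo_pp (v1 := -(x.1 - y.1)) (v2 := (x.2 - y.2)) (w1 := -(z.1 - y.1)) (by linarith)
      h2 (hw.imp (hw1 _) id) (by rw [abs_neg, abs_neg, flip]; exact conv x h)
    linarith
  · left; right; intro x h
    have := geo_pp (v1 := -(x.1 - y.1)) (v2 := -(x.2 - y.2)) (w1 := -(z.1 - y.1))
      (w2 := -(z.2 - y.2)) (by linarith)
      (by linarith) (hw.imp (hw1 _) (hw1 _))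
      (by rw [abs_neg, abs_neg, abs_neg, abs_neg, flip, flip]; exact conv x h)
    linarith

lemma ex_between {μ : Measure (ℝ × ℝ)} {ε : ℝ}
    (h : ∀ a, ¬ msupport μ ⊆ diagLine ε a) :
    ∃ t : ℝ, μ {x | x.2 - ε * x.1 < t} ≠ 0 ∧ μ {x | t < x.2 - ε * x.1} ≠ 0 := by
  have main : ∀ p ∈ msupport μ, ∀ q ∈ msupport μ, p.2 - ε * p.1 < q.2 - ε * q.1 →
      ∃ t : ℝ, μ {x | x.2 - ε * x.1 < t} ≠ 0 ∧ μ {x | t < x.2 - ε * x.1} ≠ 0 := by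
    intro p hp q hq hpq
    obtain ⟨t, h1, h2⟩ := exists_between hpq
    exact ⟨t, hp _ (isOpen_lt (by fun_prop) (by fun_prop)) h1,
      hq _ (isOpen_lt (by fun_prop) (by fun_prop)) h2⟩
  obtain ⟨p, hp, -⟩ := Set.not_subset.1 (h 0)
  obtain ⟨q, hq, hq'⟩ := Set.not_subset.1 (h (p.2 - ε * p.1))
  have hne : p.2 - ε * p.1 ≠ q.2 - ε * q.1 := by
    intro hh; apply hq'; simp only [diagLine, Set.mem_ofPred_eq]; linarith
  rcases lt_or_gt_of_ne hne with h | h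
  · exact main p hp q hq h
  · exact main q hq p hp h

lemma backward (μ : Measure (ℝ × ℝ)) (hμ : μ ∈ WSet (ℝ × ℝ) 1)
    (H : ∀ ν ∈ WSet (ℝ × ℝ) 1, ∃ η ∈ WSet (ℝ × ℝ) 1,
      Wdist 1 μ ν = Wdist 1 ν η ∧ Wdist 1 ν η = (1 / 2) * Wdist 1 μ η) :
    ∃ ε a : ℝ, (ε = 1 ∨ ε = -1) ∧ msupport μ ⊆ diagLine ε a := by
  by_contra! hcon
  obtain ⟨t, ht1, ht2⟩ := ex_between (fun a => hcon 1 a (Or.inl rfl))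
  obtain ⟨s, hs1, hs2⟩ := ex_between (fun a => hcon (-1) a (Or.inr rfl))
  set y : ℝ × ℝ := ((s - t) / 2, (s + t) / 2) with hy
  have hy1 : y.1 + y.2 = s := by simp only [hy]; ring
  have hy2 : y.1 - y.2 = -t := by simp only [hy]; ring
  obtain ⟨η, hη, e1, e2⟩ := H _ (dirac_mem y)
  have := hμ.1
  have := hη.1
  have f1 := EW_ne_top hμ (dirac_mem y)
  have f2 := EW_ne_top (dirac_mem y) hη
  have f3 := EW_ne_top hμ hη
  rw [Wdist_eq, Wdist_eq] at e1 e2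
  have e1' : EW μ (Measure.dirac y) = EW (Measure.dirac y) η := (ENNReal.toReal_eq_toReal_iff' f1 f2).1 e1
  have e3 : EW μ (Measure.dirac y) + EW (Measure.dirac y) η = EW μ η := by
    rw [← ENNReal.toReal_eq_toReal_iff' (by simp [f1, f2]) f3, ENNReal.toReal_add f1 f2]
    linarith
  -- a positivity fact
  have hpos : EW μ (Measure.dirac y) ≠ 0 := by
    rw [EW_dirac_right]
    intro h0
    rw [lintegral_eq_zero_iff (by fun_prop)] at h0
    apply ht1
    rw [measure_eq_zero_iff_ae_notMem]
    filter_upwards [h0] with x hx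
    have hx' : x = y := by simpa using hx
    simp only [not_lt]
    rw [hx']; linarith
  have hη0 : ∃ᵐ z ∂η, z ≠ y := by
    intro h
    apply hpos
    rw [e1', EW_dirac_left, lintegral_eq_zero_iff (by fun_prop)]
    filter_upwards [h] with z hz
    have : z = y := not_not.1 hz
    simp [this]
  -- equality in the triangle inequality
  have hsum : ∫⁻ q, (edist q.1 y + edist y q.2) ∂(μ.prod η) = EW μ η := by
    rw [← e3, EW_dirac_right, EW_dirac_left, lintegral_add_left (by fun_prop),
      lintegral_prod _ (by fun_prop), lintegral_prod _ (by fun_prop)]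
    simp
  have hle : EW μ η ≤ ∫⁻ q, edist q.1 q.2 ∂(μ.prod η) := EW_le _ (by simp) (by simp)
  have hae : ∀ᵐ q ∂(μ.prod η), edist q.1 q.2 = edist q.1 y + edist y q.2 := by
    apply ae_eq_of_ae_le_of_lintegral_le (Filter.Eventually.of_forall fun q => edist_triangle _ _ _)
    · refine ne_top_of_le_ne_top (b := EW μ η) f3 ?_
      rw [← hsum]
      exact lintegral_mono fun q => edist_triangle _ _ _
    · fun_prop
    · rw [hsum]; exact hle
  have hae2 : ∀ᵐ z ∂η, ∀ᵐ x ∂μ, edist x z = edist x y + edist y z := by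
    have h1 : ∀ᵐ q ∂(η.prod μ), edist q.2 q.1 = edist q.2 y + edist y q.1 := by
      rw [← Measure.prod_swap] at hae
      exact ae_of_ae_map measurable_swap.aemeasurable hae
    exact Measure.ae_ae_of_ae_prod h1
  obtain ⟨z, hz, hzx⟩ := (hη0.and_eventually hae2).exists
  have hzx' : ∀ᵐ x ∂μ, dist x y + dist y z ≤ dist x z := by
    filter_upwards [hzx] with x hx
    rw [edist_dist, edist_dist, edist_dist, ← ENNReal.ofReal_add dist_nonneg dist_nonneg,
      ENNReal.ofReal_eq_ofReal_iff dist_nonneg (by positivity)] at hx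
    exact hx.ge
  rcases geo hz with (h | h) | (h | h)
  · apply hs2
    rw [measure_eq_zero_iff_ae_notMem]
    filter_upwards [hzx'] with x hx
    have := h x hx
    simp only [not_lt]; linarith
  · apply hs1
    rw [measure_eq_zero_iff_ae_notMem]
    filter_upwards [hzx'] with x hx
    have := h x hx
    simp only [not_lt]; linarith
  · apply ht1
    rw [measure_eq_zero_iff_ae_notMem]
    filter_upwards [hzx'] with x hx
    have := h x hx
    simp only [not_lt]; linarith
  · apply ht2
    rw [measure_eq_zero_iff_ae_notMem]
    filter_upwards [hzx'] with x hx
    have := h x hx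
    simp only [not_lt]; linarith

/-! Forward direction -/

lemma ae_mem_of_msupport {μ : Measure (ℝ × ℝ)} {F : Set (ℝ × ℝ)}
    (h : msupport μ ⊆ F) : ∀ᵐ x ∂μ, x ∈ F := by
  change μ Fᶜ = 0
  apply measure_null_of_locally_null
  intro x hx
  have : x ∉ msupport μ := fun hh => hx (h hh)
  simp only [msupport, Set.mem_ofPred_eq, not_forall, not_not] at this
  obtain ⟨U, hU, hxU, h0⟩ := this
  exact ⟨U, mem_nhdsWithin_of_mem_nhds (hU.mem_nhds hxU), h0⟩

/-- signed offset from the line -/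
def g (ε a : ℝ) (y : ℝ × ℝ) : ℝ := y.2 - ε * y.1 - a

noncomputable def sg (ε a : ℝ) (y : ℝ × ℝ) : ℝ := if 0 ≤ g ε a y then 1 else -1

/-- shift away from the line by `c` -/
noncomputable def T (ε a c : ℝ) (y : ℝ × ℝ) : ℝ × ℝ :=
  (y.1 - ε * (c * sg ε a y), y.2 + c * sg ε a y)

lemma meas_g (ε a : ℝ) : Measurable (g ε a) := by unfold g; fun_prop

lemma meas_sg (ε a : ℝ) : Measurable (sg ε a) :=
  Measurable.ite (measurableSet_le measurable_const (meas_g ε a)) measurable_const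
    measurable_const

lemma meas_T (ε a c : ℝ) : Measurable (T ε a c) := by
  have := meas_sg ε a
  unfold T
  fun_prop

lemma sg_cases (ε a : ℝ) (y : ℝ × ℝ) :
    (0 ≤ g ε a y ∧ sg ε a y = 1) ∨ (g ε a y < 0 ∧ sg ε a y = -1) := by
  unfold sg
  split_ifs with h
  · exact Or.inl ⟨h, rfl⟩
  · exact Or.inr ⟨not_le.1 h, rfl⟩

lemma eps_sq {ε : ℝ} (hε : ε = 1 ∨ ε = -1) : ε * ε = 1 := by
  rcases hε with rfl | rfl <;> norm_num

lemma g_T {ε a c : ℝ} (hε : ε = 1 ∨ ε = -1) (y : ℝ × ℝ) :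
    g ε a (T ε a c y) = g ε a y + 2 * (c * sg ε a y) := by
  have := eps_sq hε
  simp only [g, T]
  linear_combination (c * sg ε a y) * this

lemma sg_T {ε a c : ℝ} (hε : ε = 1 ∨ ε = -1) (hc : 0 ≤ c) (y : ℝ × ℝ) :
    sg ε a (T ε a c y) = sg ε a y := by
  have h := g_T (a := a) (c := c) hε y
  rcases sg_cases ε a y with ⟨h1, h2⟩ | ⟨h1, h2⟩ <;>
  rcases sg_cases ε a (T ε a c y) with ⟨h3, h4⟩ | ⟨h3, h4⟩ <;> rw [h2] at h ⊢ <;> rw [h4] <;>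
  exfalso <;> linarith

lemma abs_g_T {ε a c : ℝ} (hε : ε = 1 ∨ ε = -1) (hc : 0 ≤ c) (y : ℝ × ℝ) :
    |g ε a (T ε a c y)| = |g ε a y| + 2 * c := by
  rw [g_T hε]
  rcases sg_cases ε a y with ⟨h1, h2⟩ | ⟨h1, h2⟩ <;> rw [h2]
  · rw [abs_of_nonneg h1, abs_of_nonneg (by linarith)]; ring
  · rw [abs_of_neg h1, abs_of_neg (by linarith)]; ring

lemma T_inv {ε a c : ℝ} (hε : ε = 1 ∨ ε = -1) (hc : 0 ≤ c) (y : ℝ × ℝ) :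
    T ε a (-c) (T ε a c y) = y := by
  have h := sg_T (a := a) hε hc y
  have e : T ε a (-c) (T ε a c y) = ((T ε a c y).1 - ε * (-c * sg ε a (T ε a c y)),
    (T ε a c y).2 + -c * sg ε a (T ε a c y)) := rfl
  rw [e, h]
  ext <;> simp only [T] <;> ring

lemma dist_T {ε a c : ℝ} (hε : ε = 1 ∨ ε = -1) (hc : 0 ≤ c) (y : ℝ × ℝ) :
    dist y (T ε a c y) = c := by
  rw [dist_eq]
  simp only [T]
  rcases hε with rfl | rfl <;> rcases sg_cases _ a y with ⟨h1, h2⟩ | ⟨h1, h2⟩ <;> rw [h2] <;>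
    ring_nf <;> simp [abs_of_nonneg hc]

lemma half_abs (u v : ℝ) : max |u| |v| = |u + v| / 2 + |u - v| / 2 := by
  rcases le_total 0 (u + v) with h1 | h1 <;> rcases le_total 0 (u - v) with h2 | h2 <;>
  simp only [abs_of_nonneg, abs_of_nonpos, h1, h2] <;>
  rcases le_total 0 u with h3 | h3 <;> rcases le_total 0 v with h4 | h4 <;>
  simp only [abs_of_nonneg, abs_of_nonpos, h3, h4] <;>
  first
  | (rw [max_eq_left (by linarith)]; linarith)
  | (rw [max_eq_right (by linarith)]; linarith)

lemma dist_half {ε : ℝ} (hε : ε = 1 ∨ ε = -1) (x y : ℝ × ℝ) :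
    dist x y = |(x.2 - y.2) + ε * (x.1 - y.1)| / 2 + |(x.2 - y.2) - ε * (x.1 - y.1)| / 2 := by
  rw [← half_abs, dist_eq, max_comm]
  rcases hε with rfl | rfl <;> simp [abs_sub_comm]

lemma g_lip {ε a : ℝ} (hε : ε = 1 ∨ ε = -1) (x y : ℝ × ℝ) :
    |g ε a y| / 2 ≤ |g ε a x| / 2 + dist x y := by
  rw [dist_half hε]
  have h1 := abs_nonneg ((x.2 - y.2) + ε * (x.1 - y.1))
  have h2 : g ε a y = g ε a x - ((x.2 - y.2) - ε * (x.1 - y.1)) := by simp only [g]; ring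
  have h3 := abs_sub (g ε a x) ((x.2 - y.2) - ε * (x.1 - y.1))
  rw [← h2] at h3
  rw [h2]
  have h4 := abs_sub_le (g ε a x - ((x.2 - y.2) - ε * (x.1 - y.1))) (g ε a x) 0
  simp only [sub_zero, sub_sub_cancel_left, abs_neg] at h4
  linarith

lemma dist_line_T {ε a c : ℝ} (hε : ε = 1 ∨ ε = -1) (hc : 0 ≤ c) {x : ℝ × ℝ}
    (hx : x ∈ diagLine ε a) (y : ℝ × ℝ) :
    dist x (T ε a c y) = dist x y + c := by
  have h := abs_g_T (a := a) hε hc y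
  have hx' : x.2 = ε * x.1 + a := hx
  have e := eps_sq hε
  have k : ∀ w : ℝ × ℝ, |(x.2 - w.2) - ε * (x.1 - w.1)| = |g ε a w| := by
    intro w
    rw [← abs_neg]; congr 1; simp only [g]; linarith
  rw [dist_half hε, dist_half hε, k, k, h]
  have : (x.2 - (T ε a c y).2) + ε * (x.1 - (T ε a c y).1) =
      (x.2 - y.2) + ε * (x.1 - y.1) := by
    simp only [T]
    linear_combination (c * sg ε a y) * e
  rw [this]; ring

lemma forward (μ : Measure (ℝ × ℝ)) (hμ : μ ∈ WSet (ℝ × ℝ) 1) {ε a : ℝ}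
    (hε : ε = 1 ∨ ε = -1) (hs : msupport μ ⊆ diagLine ε a)
    (ν : Measure (ℝ × ℝ)) (hν : ν ∈ WSet (ℝ × ℝ) 1) : ∃ η ∈ WSet (ℝ × ℝ) 1,
      Wdist 1 μ ν = Wdist 1 ν η ∧ Wdist 1 ν η = (1 / 2) * Wdist 1 μ η := by
  have := hμ.1
  have := hν.1
  have fν := EW_ne_top hμ hν
  set c := (EW μ ν).toReal with hcdef
  have hc : 0 ≤ c := ENNReal.toReal_nonneg
  have hcE : ENNReal.ofReal c = EW μ ν := ENNReal.ofReal_toReal fν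
  have hT := meas_T ε a c
  have hS := meas_T ε a (-c)
  have hL := ae_mem_of_msupport hs
  have hdE : ∀ y, edist y (T ε a c y) = ENNReal.ofReal c := fun y => by
    rw [edist_dist, dist_T hε hc]
  have hdE2 : ∀ x ∈ diagLine ε a, ∀ y, edist x (T ε a c y) = edist x y + ENNReal.ofReal c := by
    intro x hx y
    rw [edist_dist, edist_dist, dist_line_T hε hc hx, ENNReal.ofReal_add dist_nonneg hc]
  set η := ν.map (T ε a c) with hηdef
  have hηp : IsProbabilityMeasure η := Measure.isProbabilityMeasure_map hT.aemeasurable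
  have hη : η ∈ WSet (ℝ × ℝ) 1 := by
    refine ⟨hηp, 0, ?_⟩
    simp only [ENNReal.rpow_one]
    rw [hηdef, lintegral_map (by fun_prop) hT]
    have : ∫⁻ y, edist (T ε a c y) 0 ∂ν ≤ ∫⁻ y, (ENNReal.ofReal c + edist y 0) ∂ν :=
      lintegral_mono fun y => by
        rw [← hdE y, edist_comm y]; exact edist_triangle _ _ _
    refine lt_of_le_of_lt this ?_
    rw [lintegral_add_left measurable_const]
    have := mem_moment hν 0
    simp [lt_top_iff_ne_top, this, -edist_zero_right]
  -- distance from ν to η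
  have d1 : EW ν η = ENNReal.ofReal c := by
    apply le_antisymm
    · have hm : Measurable fun y => (y, T ε a c y) := measurable_id.prodMk hT
      refine (EW_le (ν.map fun y => (y, T ε a c y)) ?_ ?_).trans ?_
      · rw [Measure.map_map measurable_fst hm]; exact Measure.map_id
      · rw [Measure.map_map measurable_snd hm]; rfl
      · rw [lintegral_map (by fun_prop) hm]
        simp [hdE]
    · apply le_EW
      intro π h1 h2
      have hg := meas_g ε a
      set r : ℝ × ℝ → ℝ≥0∞ := fun y => ENNReal.ofReal (|g ε a y| / 2) with hr
      have hrm : Measurable r := by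
        have : Measurable fun y => |g ε a y| / 2 := by
          exact (continuous_abs.measurable.comp hg).div_const 2
        exact this.ennreal_ofReal
      have hlip : ∀ x y, r y ≤ r x + edist x y := by
        intro x y
        rw [hr, edist_dist, ← ENNReal.ofReal_add (by positivity) dist_nonneg]
        exact ENNReal.ofReal_le_ofReal (g_lip hε x y)
      have hfin : ∫⁻ y, r y ∂ν ≠ ⊤ := by
        have : ∫⁻ y, r y ∂ν ≤ ∫⁻ y, (r 0 + edist y 0) ∂ν :=
          lintegral_mono fun y => by rw [edist_comm]; exact hlip 0 y
        refine ne_top_of_le_ne_top ?_ this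
        rw [lintegral_add_left measurable_const]
        have := mem_moment hν 0
        simp [this, hr, -edist_zero_right]
      have hrη : ∫⁻ y, r y ∂η = ∫⁻ y, r y ∂ν + ENNReal.ofReal c := by
        rw [hηdef, lintegral_map hrm hT]
        have : ∀ y, r (T ε a c y) = r y + ENNReal.ofReal c := by
          intro y
          rw [hr, ← ENNReal.ofReal_add (by positivity) hc]
          simp only [abs_g_T hε hc]
          congr 1; ring
        simp_rw [this]
        rw [lintegral_add_right _ measurable_const]
        simp
      have hle : ∫⁻ y, r y ∂η ≤ ∫⁻ y, r y ∂ν + ∫⁻ q, edist q.1 q.2 ∂π := by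
        rw [← fst_lint h1 hrm, ← snd_lint h2 hrm,
          ← lintegral_add_left (f := fun q : (ℝ × ℝ) × (ℝ × ℝ) => r q.1) (hrm.comp measurable_fst)]
        exact lintegral_mono fun q => hlip _ _
      rw [hrη] at hle
      exact (ENNReal.add_le_add_iff_left hfin).1 hle
  -- distance from μ to η
  have d2 : EW μ η = EW μ ν + ENNReal.ofReal c := by
    apply le_antisymm
    · rw [← tsub_le_iff_right]
      apply le_EW
      intro π h1 h2
      rw [tsub_le_iff_right]
      have hπ : IsProbabilityMeasure π := by
        constructor
        have : (π.map Prod.fst) Set.univ = 1 := by rw [h1]; simp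
        rwa [Measure.map_apply measurable_fst MeasurableSet.univ, Set.preimage_univ] at this
      have hm : Measurable fun q : (ℝ × ℝ) × (ℝ × ℝ) => (q.1, T ε a c q.2) :=
        measurable_fst.prodMk (hT.comp measurable_snd)
      refine (EW_le (π.map fun q => (q.1, T ε a c q.2)) ?_ ?_).trans ?_
      · rw [Measure.map_map measurable_fst hm]; exact h1
      · rw [Measure.map_map measurable_snd hm, hηdef, ← h2, Measure.map_map hT measurable_snd]
        rfl
      · rw [lintegral_map (by fun_prop) hm]
        have : ∫⁻ q, edist q.1 (T ε a c q.2) ∂π ≤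
            ∫⁻ q, (edist q.1 q.2 + ENNReal.ofReal c) ∂π :=
          lintegral_mono fun q => by
            rw [← hdE q.2]; exact edist_triangle _ _ _
        refine this.trans ?_
        rw [lintegral_add_right _ measurable_const]
        simp
    · apply le_EW
      intro π h1 h2
      have hπ : IsProbabilityMeasure π := by
        constructor
        have : (π.map Prod.fst) Set.univ = 1 := by rw [h1]; simp
        rwa [Measure.map_apply measurable_fst MeasurableSet.univ, Set.preimage_univ] at this
      have hm : Measurable fun q : (ℝ × ℝ) × (ℝ × ℝ) => (q.1, T ε a (-c) q.2) :=
        measurable_fst.prodMk (hS.comp measurable_snd)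
      have hle : EW μ ν ≤ ∫⁻ q, edist q.1 (T ε a (-c) q.2) ∂π := by
        refine (EW_le (π.map fun q => (q.1, T ε a (-c) q.2)) ?_ ?_).trans ?_
        · rw [Measure.map_map measurable_fst hm]; exact h1
        · rw [Measure.map_map measurable_snd hm]
          have : (Prod.snd ∘ fun q : (ℝ × ℝ) × (ℝ × ℝ) => (q.1, T ε a (-c) q.2)) =
            T ε a (-c) ∘ Prod.snd := rfl
          rw [this, ← Measure.map_map hS measurable_snd, h2, hηdef, Measure.map_map hS hT]
          have : T ε a (-c) ∘ T ε a c = id := funext fun y => T_inv hε hc y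
          rw [this, Measure.map_id]
        · rw [lintegral_map (by fun_prop) hm]
      have a1 : ∀ᵐ q ∂π, q.1 ∈ diagLine ε a := by
        rw [← h1] at hL
        exact ae_of_ae_map measurable_fst.aemeasurable hL
      have a2 : ∀ᵐ q ∂π, T ε a c (T ε a (-c) q.2) = q.2 := by
        have : ∀ᵐ z ∂η, T ε a c (T ε a (-c) z) = z := by
          rw [hηdef]
          refine (ae_map_iff (p := fun z => T ε a c (T ε a (-c) z) = z) hT.aemeasurable
            (measurableSet_eq_fun (hT.comp hS) measurable_id)).2 ?_
          exact Filter.Eventually.of_forall fun y => by rw [T_inv hε hc]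
        rw [← h2] at this
        exact ae_of_ae_map measurable_snd.aemeasurable this
      have heq : ∫⁻ q, edist q.1 q.2 ∂π =
          ∫⁻ q, (edist q.1 (T ε a (-c) q.2) + ENNReal.ofReal c) ∂π := by
        apply lintegral_congr_ae
        filter_upwards [a1, a2] with q h3 h4
        rw [← hdE2 _ h3, h4]
      rw [heq, lintegral_add_right _ measurable_const]
      simp only [lintegral_const, measure_univ, mul_one]
      gcongr
  refine ⟨η, hη, ?_, ?_⟩
  · rw [Wdist_eq, Wdist_eq, d1, hcE]
  · rw [Wdist_eq, Wdist_eq, d1, d2, hcE, ENNReal.toReal_add fν fν]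
    ring

end DiagAux

/-- A measure `μ ∈ 𝒲₁(ℝ², d_m)` is supported on a diagonal line if and only if it admits
a symmetric point with respect to every other measure. -/
theorem diag_line_support_characterization (μ : Measure (ℝ × ℝ))
    (hμ : μ ∈ WSet (ℝ × ℝ) 1) :
    (∃ ε a : ℝ, (ε = 1 ∨ ε = -1) ∧ msupport μ ⊆ diagLine ε a) ↔
    (∀ ν ∈ WSet (ℝ × ℝ) 1, ∃ η ∈ WSet (ℝ × ℝ) 1,
      Wdist 1 μ ν = Wdist 1 ν η ∧ Wdist 1 ν η = (1 / 2) * Wdist 1 μ η) := by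
  constructor
  · rintro ⟨ε, a, hε, hs⟩ ν hν
    exact DiagAux.forward μ hμ hε hs ν hν
  · exact DiagAux.backward μ hμ
end

section
/- Let μ₁, μ₂ ∈ 𝒲_1(ℝ²). Then the following are equivalent: (i) μ₁ and μ₂ are supported on the same diagonal line L_{ε,a}; (ii) for every ν ∈ 𝒲_1(ℝ²) there exists η ∈ 𝒲_1(ℝ²) such that d_{W_1}(μ_i, η) = d_{W_1}(μ_i, ν) + d_{W_1}(ν, η) for i = 1,2, and d_{W_1}(ν, η) = 1. -/
open MeasureTheory

/-- extended transport cost -/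
noncomputable def Wcost (μ ν : Measure (ℝ × ℝ)) : ENNReal :=
  ⨅ π ∈ {π : Measure ((ℝ × ℝ) × (ℝ × ℝ)) | π.map Prod.fst = μ ∧ π.map Prod.snd = ν},
    ∫⁻ q, edist q.1 q.2 ∂π

lemma Wdist_eq_Wcost (μ ν : Measure (ℝ × ℝ)) : Wdist 1 μ ν = (Wcost μ ν).toReal := by
  unfold Wdist Wcost
  simp only [ENNReal.rpow_one, div_one]

lemma WSet_iff (μ : Measure (ℝ × ℝ)) : μ ∈ WSet (ℝ × ℝ) 1 ↔
    IsProbabilityMeasure μ ∧ ∃ x₀ : ℝ × ℝ, ∫⁻ x, edist x x₀ ∂μ < ⊤ := by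
  unfold WSet
  simp only [ENNReal.rpow_one, Set.mem_setOf_eq]

lemma WSet_all {μ : Measure (ℝ × ℝ)} (h : μ ∈ WSet (ℝ × ℝ) 1) (y : ℝ × ℝ) :
    ∫⁻ x, edist x y ∂μ < ⊤ := by
  obtain ⟨hp, x₀, hx⟩ := (WSet_iff μ).1 h
  calc ∫⁻ x, edist x y ∂μ ≤ ∫⁻ x, (edist x x₀ + edist x₀ y) ∂μ :=
        lintegral_mono fun x => edist_triangle _ _ _
    _ = ∫⁻ x, edist x x₀ ∂μ + edist x₀ y := by
        rw [lintegral_add_right _ measurable_const]; simp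
    _ < ⊤ := ENNReal.add_lt_top.2 ⟨hx, edist_lt_top _ _⟩

lemma Wcost_le {μ ν : Measure (ℝ × ℝ)} (π : Measure ((ℝ × ℝ) × (ℝ × ℝ)))
    (h1 : π.map Prod.fst = μ) (h2 : π.map Prod.snd = ν) :
    Wcost μ ν ≤ ∫⁻ q, edist q.1 q.2 ∂π :=
  iInf₂_le π ⟨h1, h2⟩

lemma Wcost_le_prod (μ ν : Measure (ℝ × ℝ)) [IsProbabilityMeasure μ] [IsProbabilityMeasure ν] :
    Wcost μ ν ≤ ∫⁻ q, edist q.1 q.2 ∂(μ.prod ν) :=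
  Wcost_le _ (by simp) (by simp)

lemma lintegral_prod_fst (μ ν : Measure (ℝ × ℝ)) [IsProbabilityMeasure μ]
    [IsProbabilityMeasure ν] (f : ℝ × ℝ → ENNReal) (hf : Measurable f) :
    ∫⁻ q, f q.1 ∂(μ.prod ν) = ∫⁻ x, f x ∂μ := by
  have : (μ.prod ν).map Prod.fst = μ := by simp
  conv_rhs => rw [← this]
  rw [lintegral_map hf measurable_fst]

lemma lintegral_prod_snd (μ ν : Measure (ℝ × ℝ)) [IsProbabilityMeasure μ]
    [IsProbabilityMeasure ν] (f : ℝ × ℝ → ENNReal) (hf : Measurable f) :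
    ∫⁻ q, f q.2 ∂(μ.prod ν) = ∫⁻ x, f x ∂ν := by
  have : (μ.prod ν).map Prod.snd = ν := by simp
  conv_rhs => rw [← this]
  rw [lintegral_map hf measurable_snd]

lemma prod_cost_le (μ ν : Measure (ℝ × ℝ)) [IsProbabilityMeasure μ] [IsProbabilityMeasure ν]
    (y : ℝ × ℝ) :
    ∫⁻ q, (edist q.1 y + edist q.2 y) ∂(μ.prod ν) =
      ∫⁻ x, edist x y ∂μ + ∫⁻ x, edist x y ∂ν := by
  rw [lintegral_add_left (by fun_prop),
    lintegral_prod_fst μ ν (fun x => edist x y) (by fun_prop),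
    lintegral_prod_snd μ ν (fun x => edist x y) (by fun_prop)]

lemma prod_cost_fin {μ ν : Measure (ℝ × ℝ)} (hμ : μ ∈ WSet (ℝ × ℝ) 1)
    (hν : ν ∈ WSet (ℝ × ℝ) 1) : ∫⁻ q, edist q.1 q.2 ∂(μ.prod ν) ≠ ⊤ := by
  have := hμ.1
  have := hν.1
  have hle : ∫⁻ q, edist q.1 q.2 ∂(μ.prod ν) ≤
      ∫⁻ q, (edist q.1 0 + edist q.2 0) ∂(μ.prod ν) :=
    lintegral_mono fun q => edist_triangle_right q.1 q.2 (0 : ℝ × ℝ)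
  rw [prod_cost_le] at hle
  refine ne_top_of_le_ne_top ?_ hle
  exact (ENNReal.add_lt_top.2 ⟨WSet_all hμ 0, WSet_all hν 0⟩).ne

lemma Wcost_ne_top {μ ν : Measure (ℝ × ℝ)} (hμ : μ ∈ WSet (ℝ × ℝ) 1)
    (hν : ν ∈ WSet (ℝ × ℝ) 1) : Wcost μ ν ≠ ⊤ := by
  have := hμ.1
  have := hν.1
  exact ne_top_of_le_ne_top (prod_cost_fin hμ hν) (Wcost_le_prod μ ν)

lemma le_Wcost_dirac_right (μ : Measure (ℝ × ℝ)) (y : ℝ × ℝ) :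
    ∫⁻ x, edist x y ∂μ ≤ Wcost μ (Measure.dirac y) := by
  refine le_iInf₂ fun π hπ => ?_
  obtain ⟨h1, h2⟩ := hπ
  rw [← h1, lintegral_map (by fun_prop) measurable_fst]
  have h : ∀ᵐ q ∂π, q.2 = y := by
    have : ∀ᵐ z ∂(π.map Prod.snd), z = y := by
      rw [h2, ae_dirac_eq]; simp
    exact ae_of_ae_map measurable_snd.aemeasurable this
  refine (lintegral_congr_ae ?_).le
  filter_upwards [h] with q hq
  rw [hq]

lemma le_Wcost_dirac_left (μ : Measure (ℝ × ℝ)) (y : ℝ × ℝ) :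
    ∫⁻ x, edist x y ∂μ ≤ Wcost (Measure.dirac y) μ := by
  refine le_iInf₂ fun π hπ => ?_
  obtain ⟨h1, h2⟩ := hπ
  rw [← h2, lintegral_map (by fun_prop) measurable_snd]
  have h : ∀ᵐ q ∂π, q.1 = y := by
    have : ∀ᵐ z ∂(π.map Prod.fst), z = y := by
      rw [h1, ae_dirac_eq]; simp
    exact ae_of_ae_map measurable_fst.aemeasurable this
  refine (lintegral_congr_ae ?_).le
  filter_upwards [h] with q hq
  rw [hq, edist_comm]

lemma dirac_mem (y : ℝ × ℝ) : Measure.dirac y ∈ WSet (ℝ × ℝ) 1 := by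
  rw [WSet_iff]
  exact ⟨inferInstance, y, by simp⟩

lemma aligned_ae {μ η : Measure (ℝ × ℝ)} (hμ : μ ∈ WSet (ℝ × ℝ) 1)
    (hη : η ∈ WSet (ℝ × ℝ) 1) (y : ℝ × ℝ)
    (h : Wdist 1 μ η = Wdist 1 μ (Measure.dirac y) + Wdist 1 (Measure.dirac y) η) :
    ∀ᵐ z ∂η, ∀ x ∈ msupport μ, dist x z = dist x y + dist z y := by
  have := hμ.1
  have := hη.1
  have hd := dirac_mem y
  have hC : Wcost μ η = Wcost μ (Measure.dirac y) + Wcost (Measure.dirac y) η := by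
    simp only [Wdist_eq_Wcost] at h
    rw [← ENNReal.toReal_add (Wcost_ne_top hμ hd) (Wcost_ne_top hd hη)] at h
    exact (ENNReal.toReal_eq_toReal_iff' (Wcost_ne_top hμ hη)
      (ENNReal.add_ne_top.2 ⟨Wcost_ne_top hμ hd, Wcost_ne_top hd hη⟩)).1 h
  have hle : ∫⁻ q, (edist q.1 y + edist q.2 y) ∂(μ.prod η) ≤
      ∫⁻ q, edist q.1 q.2 ∂(μ.prod η) := by
    rw [prod_cost_le]
    refine le_trans ?_ (Wcost_le_prod μ η)
    rw [hC]
    exact add_le_add (le_Wcost_dirac_right μ y) (le_Wcost_dirac_left η y)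
  have hae := ae_eq_of_ae_le_of_lintegral_le
    (Filter.Eventually.of_forall fun q : (ℝ × ℝ) × (ℝ × ℝ) => edist_triangle_right q.1 q.2 y)
    (prod_cost_fin hμ hη) (by fun_prop) hle
  have hae2 : ∀ᵐ q ∂(η.prod μ), edist q.2 q.1 = edist q.2 y + edist q.1 y := by
    rw [← Measure.prod_swap] at hae
    exact ae_of_ae_map measurable_swap.aemeasurable hae
  have hae3 := Measure.ae_ae_of_ae_prod hae2
  filter_upwards [hae3] with z hz x hx
  by_contra hne
  refine hx {x | dist x z = dist x y + dist z y}ᶜ ?_ hne ?_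
  · rw [isOpen_compl_iff]
    exact isClosed_eq (by fun_prop) (by fun_prop)
  · have : ∀ᵐ x ∂μ, dist x z = dist x y + dist z y := by
      filter_upwards [hz] with x hx
      simp only [edist_dist] at hx
      rw [← ENNReal.ofReal_add dist_nonneg dist_nonneg] at hx
      exact (ENNReal.ofReal_eq_ofReal_iff dist_nonneg (by positivity)).1 hx
    exact this

lemma stuck {x x' z : ℝ × ℝ} (hne : |x.1 - x'.1| ≠ |x.2 - x'.2|)
    (h : dist x z = dist x ((1/2 : ℝ) • (x + x')) + dist z ((1/2 : ℝ) • (x + x')))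
    (h' : dist x' z = dist x' ((1/2 : ℝ) • (x + x')) + dist z ((1/2 : ℝ) • (x + x'))) :
    z = (1/2 : ℝ) • (x + x') := by
  obtain ⟨a, b⟩ := x
  obtain ⟨c, d⟩ := x'
  obtain ⟨p, q⟩ := z
  simp only [Prod.dist_eq, Real.dist_eq, Prod.smul_mk, Prod.mk_add_mk, smul_eq_mul,
    Prod.mk.injEq] at *
  have e1 : |a - 1/2 * (a + c)| = |a - c| / 2 := by
    rw [← abs_of_pos (show (0:ℝ) < 2 by norm_num), ← abs_div]; congr 1; norm_num; ring
  have e2 : |b - 1/2 * (b + d)| = |b - d| / 2 := by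
    rw [← abs_of_pos (show (0:ℝ) < 2 by norm_num), ← abs_div]; congr 1; norm_num; ring
  have e3 : |c - 1/2 * (a + c)| = |a - c| / 2 := by
    rw [← abs_of_pos (show (0:ℝ) < 2 by norm_num), ← abs_div, ← abs_neg]; congr 1; norm_num; ring
  have e4 : |d - 1/2 * (b + d)| = |b - d| / 2 := by
    rw [← abs_of_pos (show (0:ℝ) < 2 by norm_num), ← abs_div, ← abs_neg]; congr 1; norm_num; ring
  rw [e1, e2] at h
  rw [e3, e4] at h'
  have l1 := le_max_left |p - 1/2 * (a + c)| |q - 1/2 * (b + d)|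
  have l2 := le_max_right |p - 1/2 * (a + c)| |q - 1/2 * (b + d)|
  generalize hM : max |p - 1/2 * (a + c)| |q - 1/2 * (b + d)| = M at *
  rw [abs_le] at l1 l2
  suffices M ≤ 0 by constructor <;> linarith [l1.1, l1.2, l2.1, l2.2]
  clear hM e1 e2 e3 e4
  rcases lt_or_gt_of_ne hne with g | g
  · rw [max_eq_right (show |a - c| / 2 ≤ |b - d| / 2 by linarith)] at h h'
    have k1 : |a - p| < |b - d| / 2 + M := by
      have := le_abs_self (a - c); have := neg_abs_le (a - c)
      rw [abs_lt]; constructor <;> linarith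
    have k2 : |c - p| < |b - d| / 2 + M := by
      have := le_abs_self (a - c); have := neg_abs_le (a - c)
      rw [abs_lt]; constructor <;> linarith
    have m1 : |b - q| = |b - d| / 2 + M := by
      rcases max_choice |a - p| |b - q| with t | t <;> linarith
    have m2 : |d - q| = |b - d| / 2 + M := by
      rcases max_choice |c - p| |d - q| with t | t <;> linarith
    clear h h' k1 k2
    have := abs_nonneg (a - c)
    rcases abs_cases (b - q) with ⟨t, _⟩ | ⟨t, _⟩ <;>
    rcases abs_cases (d - q) with ⟨s, _⟩ | ⟨s, _⟩ <;>
    rcases abs_cases (b - d) with ⟨r, _⟩ | ⟨r, _⟩ <;> linarith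
  · rw [max_eq_left (show |b - d| / 2 ≤ |a - c| / 2 by linarith)] at h h'
    have k1 : |b - q| < |a - c| / 2 + M := by
      have := le_abs_self (b - d); have := neg_abs_le (b - d)
      rw [abs_lt]; constructor <;> linarith
    have k2 : |d - q| < |a - c| / 2 + M := by
      have := le_abs_self (b - d); have := neg_abs_le (b - d)
      rw [abs_lt]; constructor <;> linarith
    have m1 : |a - p| = |a - c| / 2 + M := by
      rcases max_choice |a - p| |b - q| with t | t <;> linarith
    have m2 : |c - p| = |a - c| / 2 + M := by
      rcases max_choice |c - p| |d - q| with t | t <;> linarith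
    clear h h' k1 k2
    have := abs_nonneg (b - d)
    rcases abs_cases (a - p) with ⟨t, _⟩ | ⟨t, _⟩ <;>
    rcases abs_cases (c - p) with ⟨s, _⟩ | ⟨s, _⟩ <;>
    rcases abs_cases (a - c) with ⟨r, _⟩ | ⟨r, _⟩ <;> linarith

lemma exists_line (S : Set (ℝ × ℝ))
    (hS : ∀ x ∈ S, ∀ y ∈ S, |x.1 - y.1| = |x.2 - y.2|) :
    ∃ ε a : ℝ, (ε = 1 ∨ ε = -1) ∧ S ⊆ diagLine ε a := by
  by_cases hsub : S.Subsingleton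
  · rcases S.eq_empty_or_nonempty with rfl | ⟨x, hx⟩
    · exact ⟨1, 0, Or.inl rfl, Set.empty_subset _⟩
    · refine ⟨1, x.2 - x.1, Or.inl rfl, fun y hy => ?_⟩
      rw [hsub hy hx]; simp [diagLine]
  · rw [Set.not_subsingleton_iff] at hsub
    obtain ⟨x, hx, y, hy, hxy⟩ := hsub
    have h0 : x.1 - y.1 ≠ 0 := by
      intro h
      have := hS x hx y hy
      rw [h, abs_zero] at this
      have h2 := abs_eq_zero.1 this.symm
      exact hxy (Prod.ext (by linarith) (by linarith))
    rcases abs_eq_abs.1 (hS x hx y hy) with e | e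
    · refine ⟨1, x.2 - x.1, Or.inl rfl, fun z hz => ?_⟩
      change z.2 = 1 * z.1 + (x.2 - x.1)
      rcases abs_eq_abs.1 (hS x hx z hz) with f | f
      · linarith
      · rcases abs_eq_abs.1 (hS y hy z hz) with g | g
        · linarith
        · exact absurd (by linarith) h0
    · refine ⟨-1, x.2 + x.1, Or.inr rfl, fun z hz => ?_⟩
      change z.2 = -1 * z.1 + (x.2 + x.1)
      rcases abs_eq_abs.1 (hS x hx z hz) with f | f
      · rcases abs_eq_abs.1 (hS y hy z hz) with g | g
        · exact absurd (by linarith) h0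
        · linarith
      · linarith

lemma ae_mem_line {μ : Measure (ℝ × ℝ)} {ε a : ℝ} (h : msupport μ ⊆ diagLine ε a) :
    ∀ᵐ x ∂μ, x ∈ diagLine ε a := by
  change μ (diagLine ε a)ᶜ = 0
  refine measure_null_of_locally_null _ fun x hx => ?_
  have hx' : x ∉ msupport μ := fun hh => hx (h hh)
  simp only [msupport, Set.mem_setOf_eq, not_forall, not_not] at hx'
  obtain ⟨U, hU, hxU, h0⟩ := hx'
  exact ⟨U, mem_nhdsWithin_of_mem_nhds (hU.mem_nhds hxU), h0⟩

/-- signed offset from the line -/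
def gfun (ε a : ℝ) (x : ℝ × ℝ) : ℝ := x.1 - ε * (x.2 - a)

/-- moving `s` away from the line -/
noncomputable def Tmap (ε a s : ℝ) (x : ℝ × ℝ) : ℝ × ℝ :=
  if 0 ≤ gfun ε a x then (x.1 + s, x.2 - ε * s) else (x.1 - s, x.2 + ε * s)

lemma gfun_meas (ε a : ℝ) : Measurable (gfun ε a) := by unfold gfun; fun_prop

lemma Tmap_meas (ε a s : ℝ) : Measurable (Tmap ε a s) := by
  unfold Tmap
  exact Measurable.ite (measurableSet_le measurable_const (gfun_meas ε a))
    (by fun_prop) (by fun_prop)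

lemma gfun_T (ε a : ℝ) (hε : ε = 1 ∨ ε = -1) (x : ℝ × ℝ) :
    |gfun ε a (Tmap ε a 1 x)| = |gfun ε a x| + 2 := by
  unfold Tmap
  split_ifs with h
  · have : gfun ε a (x.1 + 1, x.2 - ε * 1) = gfun ε a x + 2 := by
      rcases hε with rfl | rfl <;> simp only [gfun] <;> ring
    rw [this, abs_of_nonneg h, abs_of_nonneg (by linarith)]
  · push Not at h
    have : gfun ε a (x.1 - 1, x.2 + ε * 1) = gfun ε a x - 2 := by
      rcases hε with rfl | rfl <;> simp only [gfun] <;> ring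
    rw [this, abs_of_neg h, abs_of_neg (by linarith)]; ring

lemma Tmap_inv (ε a : ℝ) (hε : ε = 1 ∨ ε = -1) (x : ℝ × ℝ) :
    Tmap ε a (-1) (Tmap ε a 1 x) = x := by
  have h1 : Tmap ε a 1 x =
    if 0 ≤ gfun ε a x then (x.1 + 1, x.2 - ε * 1) else (x.1 - 1, x.2 + ε * 1) := rfl
  split_ifs at h1 with h
  · have : gfun ε a (x.1 + 1, x.2 - ε * 1) = gfun ε a x + 2 := by
      rcases hε with rfl | rfl <;> simp only [gfun] <;> ring
    rw [h1, Tmap, if_pos (by rw [this]; linarith)]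
    ext <;> simp
  · have : gfun ε a (x.1 - 1, x.2 + ε * 1) = gfun ε a x - 2 := by
      rcases hε with rfl | rfl <;> simp only [gfun] <;> ring
    rw [h1, Tmap, if_neg (by rw [this]; linarith)]
    ext <;> simp

lemma dist_line (ε a : ℝ) (hε : ε = 1 ∨ ε = -1) {p : ℝ × ℝ} (hp : p ∈ diagLine ε a)
    (x : ℝ × ℝ) :
    dist p (Tmap ε a 1 x) = dist p x + 1 := by
  obtain ⟨t, u⟩ := p
  obtain ⟨x, y⟩ := x
  change u = ε * t + a at hp
  subst hp
  unfold Tmap gfun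
  rcases hε with rfl | rfl <;> split_ifs with h <;>
    simp only [Prod.dist_eq, Real.dist_eq] at * <;>
    grind

lemma edist_line (ε a : ℝ) (hε : ε = 1 ∨ ε = -1) {p : ℝ × ℝ} (hp : p ∈ diagLine ε a)
    (x : ℝ × ℝ) :
    edist p (Tmap ε a 1 x) = edist p x + 1 := by
  rw [edist_dist, edist_dist, dist_line ε a hε hp, ENNReal.ofReal_add dist_nonneg zero_le_one,
    ENNReal.ofReal_one]

lemma edist_T (ε a : ℝ) (hε : ε = 1 ∨ ε = -1) (x : ℝ × ℝ) :
    edist x (Tmap ε a 1 x) = 1 := by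
  have : dist x (Tmap ε a 1 x) = 1 := by
    unfold Tmap
    rcases hε with rfl | rfl <;> split_ifs <;> simp [Prod.dist_eq, Real.dist_eq]
  rw [edist_dist, this, ENNReal.ofReal_one]

lemma Wcost_T {μ ν : Measure (ℝ × ℝ)} {ε a : ℝ} (hε : ε = 1 ∨ ε = -1)
    (h : msupport μ ⊆ diagLine ε a) :
    Wcost μ (ν.map (Tmap ε a 1)) = Wcost μ ν + 1 * μ Set.univ := by
  have hl := ae_mem_line h
  have hT := Tmap_meas ε a 1
  have hT' := Tmap_meas ε a (-1)
  have hl' : ∀ π : Measure ((ℝ × ℝ) × (ℝ × ℝ)), π.map Prod.fst = μ →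
      ∀ᵐ q ∂π, q.1 ∈ diagLine ε a := by
    intro π h1
    rw [← h1] at hl
    exact ae_of_ae_map measurable_fst.aemeasurable hl
  have hmass : ∀ π : Measure ((ℝ × ℝ) × (ℝ × ℝ)), π.map Prod.fst = μ →
      π Set.univ = μ Set.univ := by
    intro π h1
    rw [← h1, Measure.map_apply measurable_fst MeasurableSet.univ, Set.preimage_univ]
  apply le_antisymm
  · have : Wcost μ ν + 1 * μ Set.univ = ⨅ π ∈ {π : Measure ((ℝ × ℝ) × (ℝ × ℝ)) |
        π.map Prod.fst = μ ∧ π.map Prod.snd = ν},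
        (∫⁻ q, edist q.1 q.2 ∂π + 1 * μ Set.univ) := by
      unfold Wcost
      simp only [ENNReal.iInf_add]
    rw [this]
    refine le_iInf₂ fun π hπ => ?_
    obtain ⟨h1, h2⟩ := hπ
    have hm : Measurable fun q : (ℝ × ℝ) × (ℝ × ℝ) => (q.1, Tmap ε a 1 q.2) := by fun_prop
    refine (Wcost_le (π.map fun q => (q.1, Tmap ε a 1 q.2)) ?_ ?_).trans ?_
    · rw [Measure.map_map measurable_fst hm]; exact h1
    · rw [Measure.map_map measurable_snd hm, ← h2, Measure.map_map hT measurable_snd]; rfl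
    · rw [lintegral_map (by fun_prop) hm]
      have : ∫⁻ q, edist q.1 (Tmap ε a 1 q.2) ∂π = ∫⁻ q, (edist q.1 q.2 + 1) ∂π := by
        refine lintegral_congr_ae ?_
        filter_upwards [hl' π h1] with q hq
        exact edist_line ε a hε hq _
      rw [this, lintegral_add_right _ measurable_const, lintegral_const, hmass π h1]
  · refine le_iInf₂ fun π hπ => ?_
    obtain ⟨h1, h2⟩ := hπ
    have hm : Measurable fun q : (ℝ × ℝ) × (ℝ × ℝ) => (q.1, Tmap ε a (-1) q.2) := by fun_prop
    have hc : Wcost μ ν ≤ ∫⁻ q, edist q.1 (Tmap ε a (-1) q.2) ∂π := by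
      refine (Wcost_le (π.map fun q => (q.1, Tmap ε a (-1) q.2)) ?_ ?_).trans ?_
      · rw [Measure.map_map measurable_fst hm]; exact h1
      · rw [Measure.map_map measurable_snd hm]
        change π.map (Tmap ε a (-1) ∘ Prod.snd) = ν
        rw [← Measure.map_map hT' measurable_snd, h2, Measure.map_map hT' hT]
        have : Tmap ε a (-1) ∘ Tmap ε a 1 = id := funext fun x => Tmap_inv ε a hε x
        rw [this, Measure.map_id]
      · rw [lintegral_map (by fun_prop) hm]
    have hz : ∀ᵐ q ∂π, Tmap ε a 1 (Tmap ε a (-1) q.2) = q.2 := by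
      have : ∀ᵐ z ∂(π.map Prod.snd), Tmap ε a 1 (Tmap ε a (-1) z) = z := by
        rw [h2]
        refine (ae_map_iff hT.aemeasurable
          (measurableSet_eq_fun (hT.comp hT') measurable_id)).2 ?_
        exact Filter.Eventually.of_forall fun x => congrArg (Tmap ε a 1) (Tmap_inv ε a hε x)
      exact ae_of_ae_map measurable_snd.aemeasurable this
    have : ∫⁻ q, edist q.1 q.2 ∂π = ∫⁻ q, (edist q.1 (Tmap ε a (-1) q.2) + 1) ∂π := by
      refine lintegral_congr_ae ?_
      filter_upwards [hl' π h1, hz] with q hq hq2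
      rw [← edist_line ε a hε hq, hq2]
    rw [this, lintegral_add_right _ measurable_const, lintegral_const, hmass π h1]
    gcongr

lemma Tmap_mem {ν : Measure (ℝ × ℝ)} (hν : ν ∈ WSet (ℝ × ℝ) 1) {ε a : ℝ}
    (hε : ε = 1 ∨ ε = -1) : ν.map (Tmap ε a 1) ∈ WSet (ℝ × ℝ) 1 := by
  have := hν.1
  rw [WSet_iff]
  refine ⟨Measure.isProbabilityMeasure_map (Tmap_meas ε a 1).aemeasurable, 0, ?_⟩
  rw [lintegral_map (by fun_prop) (Tmap_meas ε a 1)]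
  calc ∫⁻ x, edist (Tmap ε a 1 x) 0 ∂ν ≤ ∫⁻ x, (edist x 0 + 1) ∂ν := by
        refine lintegral_mono fun x => ?_
        refine (edist_triangle_left _ _ x).trans ?_
        rw [edist_T ε a hε, add_comm]
    _ = ∫⁻ x, edist x 0 ∂ν + 1 := by
        rw [lintegral_add_right _ measurable_const]; simp
    _ < ⊤ := ENNReal.add_lt_top.2 ⟨WSet_all hν 0, ENNReal.one_lt_top⟩

lemma gfun_lip (ε a : ℝ) (hε : ε = 1 ∨ ε = -1) (x y : ℝ × ℝ) :
    |gfun ε a y| / 2 ≤ |gfun ε a x| / 2 + dist x y := by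
  have h1 : |x.1 - y.1| ≤ dist x y := by
    rw [Prod.dist_eq]; exact le_max_left _ _
  have h2 : |x.2 - y.2| ≤ dist x y := by
    rw [Prod.dist_eq]; exact le_max_right _ _
  rw [abs_le] at h1 h2
  have h3 := le_abs_self (gfun ε a x)
  have h4 := neg_abs_le (gfun ε a x)
  have : |gfun ε a y| ≤ |gfun ε a x| + 2 * dist x y := by
    rw [abs_le]
    rcases hε with rfl | rfl <;> simp only [gfun] at * <;> constructor <;> linarith
  linarith

lemma Wcost_self_T {ν : Measure (ℝ × ℝ)} (hν : ν ∈ WSet (ℝ × ℝ) 1) {ε a : ℝ}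
    (hε : ε = 1 ∨ ε = -1) : Wcost ν (ν.map (Tmap ε a 1)) = 1 := by
  have := hν.1
  have hT := Tmap_meas ε a 1
  have hg := gfun_meas ε a
  apply le_antisymm
  · have hm : Measurable fun x : ℝ × ℝ => (x, Tmap ε a 1 x) := by fun_prop
    refine (Wcost_le (ν.map fun x => (x, Tmap ε a 1 x)) ?_ ?_).trans ?_
    · rw [Measure.map_map measurable_fst hm]; exact Measure.map_id
    · rw [Measure.map_map measurable_snd hm]; rfl
    · rw [lintegral_map (by fun_prop) hm]
      simp [edist_T ε a hε]
  · refine le_iInf₂ fun π hπ => ?_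
    obtain ⟨h1, h2⟩ := hπ
    have hf : Measurable fun x => ENNReal.ofReal (|gfun ε a x| / 2) := by
      have : Measurable fun x => |gfun ε a x| := hg.abs
      fun_prop
    have hlip : ∀ x y : ℝ × ℝ, ENNReal.ofReal (|gfun ε a y| / 2) ≤
        ENNReal.ofReal (|gfun ε a x| / 2) + edist x y := by
      intro x y
      rw [edist_dist, ← ENNReal.ofReal_add (by positivity) dist_nonneg]
      exact ENNReal.ofReal_le_ofReal (gfun_lip ε a hε x y)
    have hfin : ∫⁻ x, ENNReal.ofReal (|gfun ε a x| / 2) ∂ν ≠ ⊤ := by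
      refine ne_top_of_le_ne_top ?_ (lintegral_mono fun x => hlip 0 x)
      rw [lintegral_add_left measurable_const]
      simp only [lintegral_const, measure_univ, mul_one, edist_comm (0 : ℝ × ℝ)]
      exact (ENNReal.add_lt_top.2 ⟨ENNReal.ofReal_lt_top, WSet_all hν 0⟩).ne
    have e1 : ∫⁻ z, ENNReal.ofReal (|gfun ε a z| / 2) ∂(ν.map (Tmap ε a 1)) =
        ∫⁻ x, ENNReal.ofReal (|gfun ε a x| / 2) ∂ν + 1 := by
      rw [lintegral_map hf hT]
      have : ∀ x, ENNReal.ofReal (|gfun ε a (Tmap ε a 1 x)| / 2) =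
          ENNReal.ofReal (|gfun ε a x| / 2) + 1 := by
        intro x
        rw [gfun_T ε a hε, ← ENNReal.ofReal_one,
          ← ENNReal.ofReal_add (by positivity) zero_le_one]
        congr 1; ring
      simp only [this]
      rw [lintegral_add_right _ measurable_const]; simp
    have e2 : ∫⁻ z, ENNReal.ofReal (|gfun ε a z| / 2) ∂(ν.map (Tmap ε a 1)) ≤
        ∫⁻ x, ENNReal.ofReal (|gfun ε a x| / 2) ∂ν + ∫⁻ q, edist q.1 q.2 ∂π := by
      rw [← h2, lintegral_map hf measurable_snd]
      conv_rhs => rw [← h1]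
      rw [lintegral_map hf measurable_fst, ← lintegral_add_right _ (by fun_prop)]
      exact lintegral_mono fun q => hlip q.1 q.2
    rw [e1] at e2
    exact (ENNReal.add_le_add_iff_left hfin).1 e2

theorem same_diag_line_support_characterization (μ₁ μ₂ : Measure (ℝ × ℝ))
    (hμ₁ : μ₁ ∈ WSet (ℝ × ℝ) 1) (hμ₂ : μ₂ ∈ WSet (ℝ × ℝ) 1) :
    (∃ ε a : ℝ, (ε = 1 ∨ ε = -1) ∧ msupport μ₁ ⊆ diagLine ε a ∧
      msupport μ₂ ⊆ diagLine ε a) ↔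
    (∀ ν ∈ WSet (ℝ × ℝ) 1, ∃ η ∈ WSet (ℝ × ℝ) 1,
      Wdist 1 μ₁ η = Wdist 1 μ₁ ν + Wdist 1 ν η ∧
      Wdist 1 μ₂ η = Wdist 1 μ₂ ν + Wdist 1 ν η ∧
      Wdist 1 ν η = 1) := by
  constructor
  · rintro ⟨ε, a, hε, h1, h2⟩ ν hν
    have hp1 := hμ₁.1
    have hp2 := hμ₂.1
    have hs : Wdist 1 ν (ν.map (Tmap ε a 1)) = 1 := by
      rw [Wdist_eq_Wcost, Wcost_self_T hν hε, ENNReal.toReal_one]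
    refine ⟨ν.map (Tmap ε a 1), Tmap_mem hν hε, ?_, ?_, hs⟩
    · rw [hs, Wdist_eq_Wcost, Wdist_eq_Wcost, Wcost_T hε h1, measure_univ, mul_one,
        ENNReal.toReal_add (Wcost_ne_top hμ₁ hν) ENNReal.one_ne_top, ENNReal.toReal_one]
    · rw [hs, Wdist_eq_Wcost, Wdist_eq_Wcost, Wcost_T hε h2, measure_univ, mul_one,
        ENNReal.toReal_add (Wcost_ne_top hμ₂ hν) ENNReal.one_ne_top, ENNReal.toReal_one]
  · intro H
    have key : ∀ x ∈ msupport μ₁ ∪ msupport μ₂, ∀ y ∈ msupport μ₁ ∪ msupport μ₂,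
        |x.1 - y.1| = |x.2 - y.2| := by
      intro x hx x' hx'
      by_contra hne
      obtain ⟨η, hη, e1, e2, e3⟩ := H _ (dirac_mem ((1/2 : ℝ) • (x + x')))
      have hηp := hη.1
      have a1 := aligned_ae hμ₁ hη _ e1
      have a2 := aligned_ae hμ₂ hη _ e2
      have a3 : ∀ᵐ z ∂η, z = (1/2 : ℝ) • (x + x') := by
        filter_upwards [a1, a2] with z b1 b2
        have b : ∀ x ∈ msupport μ₁ ∪ msupport μ₂, _ := fun x hx => hx.elim (b1 x) (b2 x)
        exact stuck hne (b x hx) (b x' hx')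
      have h0 : Wcost (Measure.dirac ((1/2 : ℝ) • (x + x'))) η = 0 := by
        refine le_antisymm ((Wcost_le_prod _ _).trans ?_) bot_le
        have hle : ∫⁻ q, edist q.1 q.2 ∂((Measure.dirac ((1/2 : ℝ) • (x + x'))).prod η) ≤
            ∫⁻ q, (edist q.1 ((1/2 : ℝ) • (x + x')) + edist q.2 ((1/2 : ℝ) • (x + x')))
              ∂((Measure.dirac ((1/2 : ℝ) • (x + x'))).prod η) :=
          lintegral_mono fun q => edist_triangle_right q.1 q.2 ((1/2 : ℝ) • (x + x'))
        refine hle.trans ?_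
        rw [prod_cost_le, lintegral_dirac, edist_self, zero_add]
        rw [lintegral_congr_ae (g := fun _ => 0)]
        · simp
        · filter_upwards [a3] with z hz
          rw [hz, edist_self]
      rw [Wdist_eq_Wcost, h0] at e3
      simp at e3
    obtain ⟨ε, a, hε, hS⟩ := exists_line _ key
    exact ⟨ε, a, hε, Set.subset_union_left.trans hS, Set.subset_union_right.trans hS⟩
end

section
/- The Wasserstein space 𝒲_1(ℝ²) over ℝ² with the maximum metric is diagonally rigid: for every isometry Φ : 𝒲_1(ℝ²) → 𝒲_1(ℝ²) there exists an isometry T of (ℝ², d_m) such that (Φ ∘ T_#)(μ) = μ for every μ ∈ 𝒲_1(ℝ²) whose support is contained in L₊ or in L₋. -/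
open MeasureTheory

open scoped ENNReal

namespace DiagRigid

abbrev WS : Set (Measure (ℝ × ℝ)) := WSet (ℝ × ℝ) 1

/-- Extended-real valued transport cost. -/
noncomputable def W (μ ν : Measure (ℝ × ℝ)) : ℝ≥0∞ :=
  ⨅ π ∈ {π : Measure ((ℝ × ℝ) × (ℝ × ℝ)) | π.map Prod.fst = μ ∧ π.map Prod.snd = ν},
    ∫⁻ q, edist q.1 q.2 ∂π

lemma Wdist_eq (μ ν : Measure (ℝ × ℝ)) : Wdist 1 μ ν = (W μ ν).toReal := by
  simp [Wdist, W]

lemma W_le {μ ν : Measure (ℝ × ℝ)} {π : Measure ((ℝ × ℝ) × (ℝ × ℝ))}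
    (h1 : π.map Prod.fst = μ) (h2 : π.map Prod.snd = ν) :
    W μ ν ≤ ∫⁻ q, edist q.1 q.2 ∂π :=
  iInf₂_le π ⟨h1, h2⟩

lemma le_W {μ ν : Measure (ℝ × ℝ)} {c : ℝ≥0∞}
    (h : ∀ π : Measure ((ℝ × ℝ) × (ℝ × ℝ)), π.map Prod.fst = μ → π.map Prod.snd = ν →
      c ≤ ∫⁻ q, edist q.1 q.2 ∂π) : c ≤ W μ ν :=
  le_iInf₂ fun π hπ => h π hπ.1 hπ.2

lemma mem_WS {μ : Measure (ℝ × ℝ)} :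
    μ ∈ WS ↔ IsProbabilityMeasure μ ∧ ∃ x₀ : ℝ × ℝ, ∫⁻ x, edist x x₀ ∂μ < ⊤ := by
  simp [WS, WSet]

lemma moment_fin {μ : Measure (ℝ × ℝ)} (h : μ ∈ WS) (y : ℝ × ℝ) :
    ∫⁻ x, edist x y ∂μ < ⊤ := by
  obtain ⟨hp, x₀, hx⟩ := mem_WS.1 h
  calc ∫⁻ x, edist x y ∂μ ≤ ∫⁻ x, (edist x x₀ + edist x₀ y) ∂μ :=
        lintegral_mono fun x => edist_triangle _ _ _
    _ = ∫⁻ x, edist x x₀ ∂μ + edist x₀ y := by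
        rw [lintegral_add_right _ measurable_const]; simp
    _ < ⊤ := ENNReal.add_lt_top.2 ⟨hx, edist_lt_top _ _⟩

lemma dirac_mem (y : ℝ × ℝ) : Measure.dirac y ∈ WS :=
  mem_WS.2 ⟨inferInstance, y, by simp⟩

lemma map_mem {μ : Measure (ℝ × ℝ)} (h : μ ∈ WS) {g : ℝ × ℝ → ℝ × ℝ} (hg : Measurable g)
    {C : ℝ≥0∞} (hC : C < ⊤) (hgd : ∀ z, edist (g z) z ≤ C) : μ.map g ∈ WS := by
  have hp := (mem_WS.1 h).1
  refine mem_WS.2 ⟨Measure.isProbabilityMeasure_map hg.aemeasurable, 0, ?_⟩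
  rw [lintegral_map (by fun_prop) hg]
  calc ∫⁻ x, edist (g x) 0 ∂μ ≤ ∫⁻ x, (edist x 0 + C) ∂μ :=
        lintegral_mono fun x => by
          rw [add_comm]
          exact (edist_triangle _ x _).trans (by gcongr; exact hgd x)
    _ = ∫⁻ x, edist x 0 ∂μ + C := by
        rw [lintegral_add_right _ measurable_const]; simp
    _ < ⊤ := ENNReal.add_lt_top.2 ⟨moment_fin h _, hC⟩

lemma W_dirac_left {μ : Measure (ℝ × ℝ)} [IsProbabilityMeasure μ] (y : ℝ × ℝ) :
    W (Measure.dirac y) μ = ∫⁻ b, edist y b ∂μ := by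
  apply le_antisymm
  · refine (W_le (π := (Measure.dirac y).prod μ) (by simp) (by simp)).trans ?_
    rw [lintegral_prod _ (by fun_prop)]
    rw [lintegral_dirac' _ (by fun_prop)]
  · refine le_W fun π h1 h2 => ?_
    rw [← h2, lintegral_map (by fun_prop) measurable_snd]
    have : ∀ᵐ q ∂π, q.1 = y := by
      have : ∀ᵐ a ∂(π.map Prod.fst), a = y := by
        rw [h1]; exact (ae_dirac_iff (p := fun a => a = y) (measurableSet_singleton y)).2 rfl
      exact ae_of_ae_map measurable_fst.aemeasurable this
    refine lintegral_mono_ae ?_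
    filter_upwards [this] with q hq
    rw [hq]

lemma W_dirac_right {μ : Measure (ℝ × ℝ)} [IsProbabilityMeasure μ] (y : ℝ × ℝ) :
    W μ (Measure.dirac y) = ∫⁻ b, edist b y ∂μ := by
  apply le_antisymm
  · refine (W_le (π := μ.prod (Measure.dirac y)) (by simp) (by simp)).trans ?_
    rw [lintegral_prod _ (by fun_prop)]
    refine le_of_eq (lintegral_congr fun a => ?_)
    rw [lintegral_dirac' _ (by fun_prop)]
  · refine le_W fun π h1 h2 => ?_
    rw [← h1, lintegral_map (by fun_prop) measurable_fst]
    have : ∀ᵐ q ∂π, q.2 = y := by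
      have : ∀ᵐ a ∂(π.map Prod.snd), a = y := by
        rw [h2]; exact (ae_dirac_iff (p := fun a => a = y) (measurableSet_singleton y)).2 rfl
      exact ae_of_ae_map measurable_snd.aemeasurable this
    refine lintegral_mono_ae ?_
    filter_upwards [this] with q hq
    rw [hq]

lemma W_fin {μ ν : Measure (ℝ × ℝ)} (hμ : μ ∈ WS) (hν : ν ∈ WS) : W μ ν < ⊤ := by
  have := (mem_WS.1 hμ).1
  have := (mem_WS.1 hν).1
  refine (W_le (π := μ.prod ν) (by simp) (by simp)).trans_lt ?_
  calc ∫⁻ q, edist q.1 q.2 ∂(μ.prod ν)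
      ≤ ∫⁻ q, (edist q.1 0 + edist q.2 0) ∂(μ.prod ν) :=
        lintegral_mono fun q => edist_triangle_right _ _ _
    _ = ∫⁻ a, edist a 0 ∂μ + ∫⁻ b, edist b 0 ∂ν := by
        rw [lintegral_add_left (by fun_prop), lintegral_prod _ (by fun_prop),
          lintegral_prod _ (by fun_prop)]
        simp
    _ < ⊤ := ENNReal.add_lt_top.2 ⟨moment_fin hμ _, moment_fin hν _⟩

lemma W_lip {μ ν : Measure (ℝ × ℝ)} {f : ℝ × ℝ → ℝ≥0∞} (hf : Measurable f)
    (hl : ∀ a b, f b ≤ f a + edist a b) :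
    ∫⁻ b, f b ∂ν ≤ ∫⁻ a, f a ∂μ + W μ ν := by
  rw [W, ENNReal.add_iInf₂]
  refine le_iInf₂ fun π hπ => ?_
  rw [← hπ.1, ← hπ.2, lintegral_map hf measurable_fst, lintegral_map hf measurable_snd,
    ← lintegral_add_left (by fun_prop)]
  exact lintegral_mono fun q => hl _ _

/-- Every geodesic issuing from `μ` can be prolonged. -/
def PE (μ : Measure (ℝ × ℝ)) : Prop :=
  ∀ ν ∈ WS, ∃ ζ ∈ WS, ζ ≠ ν ∧ Wdist 1 μ ζ = Wdist 1 μ ν + Wdist 1 ν ζ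

/-- Metric characterization of the Dirac masses. -/
def PD (μ : Measure (ℝ × ℝ)) : Prop :=
  ∀ ν ∈ WS, ∃ η ∈ WS, ¬ PE η ∧ Wdist 1 μ η = Wdist 1 μ ν + Wdist 1 ν η

section inv
variable {Φ : Measure (ℝ × ℝ) → Measure (ℝ × ℝ)} {μ : Measure (ℝ × ℝ)}

lemma PE_inv (hΦ : IsWIsometry (ℝ × ℝ) 1 Φ) (hμ : μ ∈ WS) : PE (Φ μ) ↔ PE μ := by
  obtain ⟨⟨hm, hi, hs⟩, hd⟩ := hΦ
  constructor
  · intro h ν hν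
    obtain ⟨ζ', hζ', hne, he⟩ := h (Φ ν) (hm hν)
    obtain ⟨ζ, hζ, rfl⟩ := hs hζ'
    rw [hd _ hμ _ hζ, hd _ hμ _ hν, hd _ hν _ hζ] at he
    exact ⟨ζ, hζ, fun h => hne (by rw [h]), he⟩
  · intro h ν' hν'
    obtain ⟨ν, hν, rfl⟩ := hs hν'
    obtain ⟨ζ, hζ, hne, he⟩ := h ν hν
    refine ⟨Φ ζ, hm hζ, fun h => hne (hi hζ hν h), ?_⟩
    rw [hd _ hμ _ hζ, hd _ hμ _ hν, hd _ hν _ hζ, he]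

lemma PD_inv (hΦ : IsWIsometry (ℝ × ℝ) 1 Φ) (hμ : μ ∈ WS) : PD (Φ μ) ↔ PD μ := by
  have hE := fun {η} (h : η ∈ WS) => PE_inv hΦ h
  obtain ⟨⟨hm, hi, hs⟩, hd⟩ := hΦ
  constructor
  · intro h ν hν
    obtain ⟨ζ', hζ', hne, he⟩ := h (Φ ν) (hm hν)
    obtain ⟨ζ, hζ, rfl⟩ := hs hζ'
    rw [hd _ hμ _ hζ, hd _ hμ _ hν, hd _ hν _ hζ] at he
    exact ⟨ζ, hζ, fun h => hne ((hE hζ).2 h), he⟩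
  · intro h ν' hν'
    obtain ⟨ν, hν, rfl⟩ := hs hν'
    obtain ⟨ζ, hζ, hne, he⟩ := h ν hν
    refine ⟨Φ ζ, hm hζ, fun h => hne ((hE hζ).1 h), ?_⟩
    rw [hd _ hμ _ hζ, hd _ hμ _ hν, hd _ hν _ hζ, he]
end inv

/-- A pair of diagonal coordinates: `p` varies along `e`, `q` is constant along `e`. -/
structure Coord (p q : ℝ × ℝ → ℝ) (e : ℝ × ℝ) : Prop where
  cp : Continuous p
  cq : Continuous q
  dist_eq : ∀ x y, dist x y = |p x - p y| + |q x - q y|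
  pe : ∀ (z : ℝ × ℝ) (t : ℝ), p (z + t • e) = p z + t
  qe : ∀ (z : ℝ × ℝ) (t : ℝ), q (z + t • e) = q z
  p0 : p 0 = 0
  q0 : q 0 = 0

noncomputable def U (z : ℝ × ℝ) : ℝ := (z.1 + z.2) / 2
noncomputable def V (z : ℝ × ℝ) : ℝ := (z.1 - z.2) / 2

lemma dist_UV (x y : ℝ × ℝ) : dist x y = |U x - U y| + |V x - V y| := by
  simp only [U, V, Prod.dist_eq, Real.dist_eq]
  rcases abs_cases (x.1 - y.1) with h1 | h1 <;> rcases abs_cases (x.2 - y.2) with h2 | h2 <;>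
  rcases abs_cases ((x.1 + x.2) / 2 - (y.1 + y.2) / 2) with h3 | h3 <;>
  rcases abs_cases ((x.1 - x.2) / 2 - (y.1 - y.2) / 2) with h4 | h4 <;>
  rcases max_cases |x.1 - y.1| |x.2 - y.2| with h5 | h5 <;> linarith

lemma coordUV : Coord U V (1, 1) where
  cp := by unfold U; fun_prop
  cq := by unfold V; fun_prop
  dist_eq := dist_UV
  pe z t := by simp [U]; ring
  qe z t := by simp [V]
  p0 := by simp [U]
  q0 := by simp [V]

lemma coordVU : Coord V U (1, -1) where
  cp := by unfold V; fun_prop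
  cq := by unfold U; fun_prop
  dist_eq x y := by rw [dist_UV, add_comm]
  pe z t := by simp [V]; ring
  qe z t := by simp [U]; ring
  p0 := by simp [V]
  q0 := by simp [U]

lemma UV_inj {x y : ℝ × ℝ} (h1 : U x = U y) (h2 : V x = V y) : x = y := by
  rw [← dist_eq_zero, dist_UV, h1, h2]; simp

lemma ext_ae {μ η : Measure (ℝ × ℝ)} (hμ : μ ∈ WS) (hη : η ∈ WS) (y : ℝ × ℝ)
    (h : Wdist 1 μ η = Wdist 1 μ (Measure.dirac y) + Wdist 1 (Measure.dirac y) η) :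
    ∀ᵐ a ∂μ, ∀ᵐ b ∂η, dist a b = dist a y + dist y b := by
  have := (mem_WS.1 hμ).1
  have := (mem_WS.1 hη).1
  have f1 := W_fin hμ hη
  have f2 := W_fin hμ (dirac_mem y)
  have f3 := W_fin (dirac_mem y) hη
  rw [Wdist_eq, Wdist_eq, Wdist_eq, ← ENNReal.toReal_add f2.ne f3.ne,
    ENNReal.toReal_eq_toReal_iff' f1.ne (ENNReal.add_lt_top.2 ⟨f2, f3⟩).ne] at h
  have hI : ∫⁻ q, (edist q.1 y + edist y q.2) ∂(μ.prod η) = W μ η := by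
    rw [h, W_dirac_left, W_dirac_right, lintegral_add_left (by fun_prop),
      lintegral_prod _ (by fun_prop), lintegral_prod _ (by fun_prop)]
    simp
  have hle : W μ η ≤ ∫⁻ q, edist q.1 q.2 ∂(μ.prod η) := W_le (by simp) (by simp)
  have hae : (fun q : (ℝ × ℝ) × (ℝ × ℝ) => edist q.1 q.2) =ᵐ[μ.prod η]
      fun q => edist q.1 y + edist y q.2 := by
    have hp : ∀ q : (ℝ × ℝ) × (ℝ × ℝ), edist q.1 q.2 ≤ edist q.1 y + edist y q.2 :=
      fun q => edist_triangle _ _ _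
    refine ae_eq_of_ae_le_of_lintegral_le (Filter.Eventually.of_forall hp) ?_ (by fun_prop)
      (by rw [hI]; exact hle)
    exact ((lintegral_mono hp).trans_lt (by rw [hI]; exact f1)).ne
  have := Measure.ae_ae_of_ae_prod hae
  filter_upwards [this] with a ha
  filter_upwards [ha] with b hb
  simp only [edist_dist] at hb
  rwa [← ENNReal.ofReal_add dist_nonneg dist_nonneg,
    ENNReal.ofReal_eq_ofReal_iff dist_nonneg (by positivity)] at hb

/-- `y` splits `μ` in the coordinate `p`. -/
def Split (μ : Measure (ℝ × ℝ)) (p : ℝ × ℝ → ℝ) (r : ℝ) : Prop :=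
  (∃ᵐ a ∂μ, p a < r) ∧ (∃ᵐ a ∂μ, r < p a)

lemma ext_split {μ η : Measure (ℝ × ℝ)} (hμ : μ ∈ WS) (hη : η ∈ WS) (y : ℝ × ℝ)
    (h : Wdist 1 μ η = Wdist 1 μ (Measure.dirac y) + Wdist 1 (Measure.dirac y) η)
    {p q : ℝ × ℝ → ℝ} {e : ℝ × ℝ} (hc : Coord p q e) (hs : Split μ p (p y)) :
    ∀ᵐ b ∂η, p b = p y := by
  have hae := ext_ae hμ hη y h
  obtain ⟨a, ha, ha'⟩ := (hs.1.and_eventually hae).exists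
  obtain ⟨a2, ha2, ha2'⟩ := (hs.2.and_eventually hae).exists
  filter_upwards [ha', ha2'] with b h1 h2
  simp only [hc.dist_eq] at h1 h2
  have t1 := abs_sub_le (p a) (p y) (p b)
  have t2 := abs_sub_le (q a) (q y) (q b)
  have t3 := abs_sub_le (p a2) (p y) (p b)
  have t4 := abs_sub_le (q a2) (q y) (q b)
  have e1 : |p a - p b| = |p a - p y| + |p y - p b| := by linarith
  have e2 : |p a2 - p b| = |p a2 - p y| + |p y - p b| := by linarith
  rcases abs_cases (p a - p b) with k1 | k1 <;> rcases abs_cases (p a - p y) with k2 | k2 <;>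
  rcases abs_cases (p y - p b) with k3 | k3 <;> rcases abs_cases (p a2 - p b) with k4 | k4 <;>
  rcases abs_cases (p a2 - p y) with k5 | k5 <;> linarith

lemma const_of_not_split {μ : Measure (ℝ × ℝ)} [IsProbabilityMeasure μ] {p : ℝ × ℝ → ℝ}
    (h : ∀ r, ¬ Split μ p r) : ∃ c, ∀ᵐ a ∂μ, p a = c := by
  have h' : ∀ r, (∀ᵐ a ∂μ, r ≤ p a) ∨ (∀ᵐ a ∂μ, p a ≤ r) := by
    intro r
    have := h r
    simpa only [Split, not_and_or, Filter.not_frequently, not_lt] using this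
  let A : Set ℝ := {r | ∀ᵐ a ∂μ, r ≤ p a}
  have hne : A.Nonempty := by
    by_contra hA
    have h2 : ∀ n : ℕ, ∀ᵐ a ∂μ, p a ≤ -(n : ℝ) := fun n =>
      (h' (-(n : ℝ))).resolve_left fun hh => hA ⟨_, hh⟩
    obtain ⟨a, ha⟩ := (ae_all_iff.2 h2).exists
    obtain ⟨n, hn⟩ := exists_nat_gt (-(p a))
    have := ha n
    linarith
  have hbd : BddAbove A := by
    by_contra hA
    have h2 : ∀ n : ℕ, ∀ᵐ a ∂μ, (n : ℝ) ≤ p a := by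
      intro n
      rw [not_bddAbove_iff] at hA
      obtain ⟨r, hr, hnr⟩ := hA n
      filter_upwards [hr] with a ha
      linarith
    obtain ⟨a, ha⟩ := (ae_all_iff.2 h2).exists
    obtain ⟨n, hn⟩ := exists_nat_gt (p a)
    have := ha n
    linarith
  refine ⟨sSup A, ?_⟩
  have hlo : ∀ n : ℕ, ∀ᵐ a ∂μ, sSup A - 1 / ((n : ℝ) + 1) ≤ p a := by
    intro n
    obtain ⟨r, hr, hlt⟩ := exists_lt_of_lt_csSup hne
      (show sSup A - 1 / ((n : ℝ) + 1) < sSup A by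
        have : (0 : ℝ) < 1 / ((n : ℝ) + 1) := by positivity
        linarith)
    filter_upwards [hr] with a ha
    linarith
  have hhi : ∀ n : ℕ, ∀ᵐ a ∂μ, p a ≤ sSup A + 1 / ((n : ℝ) + 1) := by
    intro n
    refine (h' _).resolve_left fun hh => ?_
    have : sSup A + 1 / ((n : ℝ) + 1) ≤ sSup A := le_csSup hbd hh
    have : (0 : ℝ) < 1 / ((n : ℝ) + 1) := by positivity
    linarith
  filter_upwards [ae_all_iff.2 hlo, ae_all_iff.2 hhi] with a h1 h2
  apply le_antisymm
  · refine le_of_forall_pos_le_add fun ε hε => ?_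
    obtain ⟨n, hn⟩ := exists_nat_one_div_lt hε
    have := h2 n
    linarith
  · refine le_of_forall_pos_le_add fun ε hε => ?_
    obtain ⟨n, hn⟩ := exists_nat_one_div_lt hε
    have := h1 n
    linarith

noncomputable def sg (t : ℝ) : ℝ := if 0 ≤ t then 1 else -1

lemma measurable_sg : Measurable sg :=
  Measurable.ite measurableSet_Ici measurable_const measurable_const

noncomputable def push (p : ℝ × ℝ → ℝ) (e : ℝ × ℝ) (c : ℝ) (z : ℝ × ℝ) : ℝ × ℝ :=
  z + sg (p z - c) • e

noncomputable def pull (p : ℝ × ℝ → ℝ) (e : ℝ × ℝ) (c : ℝ) (z : ℝ × ℝ) : ℝ × ℝ :=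
  z + (-sg (p z - c)) • e

section push
variable {p q : ℝ × ℝ → ℝ} {e : ℝ × ℝ}

lemma measurable_push (hc : Coord p q e) (c : ℝ) : Measurable (push p e c) := by
  have := hc.cp.measurable
  have := measurable_sg
  unfold push
  exact measurable_id.add ((measurable_sg.comp (hc.cp.measurable.sub_const c)).smul_const e)

lemma measurable_pull (hc : Coord p q e) (c : ℝ) : Measurable (pull p e c) := by
  unfold pull
  exact measurable_id.add ((measurable_sg.comp (hc.cp.measurable.sub_const c)).neg.smul_const e)

lemma p_push (hc : Coord p q e) (c : ℝ) (z) : p (push p e c z) = p z + sg (p z - c) := hc.pe _ _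
lemma q_push (hc : Coord p q e) (c : ℝ) (z) : q (push p e c z) = q z := hc.qe _ _

lemma abs_push (hc : Coord p q e) (c : ℝ) (z) : |p (push p e c z) - c| = |p z - c| + 1 := by
  rw [p_push hc, sg]
  split_ifs with h
  · rw [abs_of_nonneg h, abs_of_nonneg (by linarith)]; ring
  · push Not at h
    rw [abs_of_neg h, abs_of_neg (by linarith)]; ring

lemma sg_push (hc : Coord p q e) (c : ℝ) (z) : sg (p (push p e c z) - c) = sg (p z - c) := by
  rw [p_push hc]
  by_cases h : 0 ≤ p z - c
  · have : sg (p z - c) = 1 := if_pos h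
    rw [this]; exact if_pos (by linarith)
  · have : sg (p z - c) = -1 := if_neg h
    rw [this]; exact if_neg (by linarith)

lemma pull_push (hc : Coord p q e) (c : ℝ) (z) : pull p e c (push p e c z) = z := by
  rw [pull, sg_push hc, push]
  module

lemma dist_push (hc : Coord p q e) {c : ℝ} {a} (ha : p a = c) (z) :
    dist a (push p e c z) = dist a z + 1 := by
  rw [hc.dist_eq, hc.dist_eq, q_push hc, abs_sub_comm, ha, abs_push hc, abs_sub_comm c]; ring

lemma edist_push (hc : Coord p q e) {c : ℝ} {a} (ha : p a = c) (z) :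
    edist a (push p e c z) = edist a z + 1 := by
  rw [edist_dist, edist_dist, dist_push hc ha, ENNReal.ofReal_add dist_nonneg zero_le_one]; simp

lemma edist_self_push (hc : Coord p q e) (c : ℝ) (z) : edist z (push p e c z) = 1 := by
  have : dist z (push p e c z) = 1 := by
    rw [hc.dist_eq, q_push hc, p_push hc, sg]; split_ifs <;> simp
  rw [edist_dist, this]; simp

lemma line_PE (hc : Coord p q e) {η : Measure (ℝ × ℝ)} (hη : η ∈ WS) {c : ℝ}
    (hl : ∀ᵐ z ∂η, p z = c) : PE η := by
  intro ν hν
  have pη := (mem_WS.1 hη).1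
  have pν := (mem_WS.1 hν).1
  have mD := measurable_push hc c
  have mD' := measurable_pull hc c
  have hζ : ν.map (push p e c) ∈ WS := map_mem hν mD ENNReal.one_lt_top fun z => by
    rw [edist_comm, edist_self_push hc]
  have h1 : W η (ν.map (push p e c)) = W η ν + 1 := by
    have hl' : ∀ π : Measure ((ℝ × ℝ) × (ℝ × ℝ)), π.map Prod.fst = η → ∀ᵐ z ∂π, p z.1 = c := by
      intro π h1
      rw [← h1] at hl
      exact ae_of_ae_map measurable_fst.aemeasurable hl
    have hu : ∀ π : Measure ((ℝ × ℝ) × (ℝ × ℝ)), π.map Prod.fst = η → π Set.univ = 1 := by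
      intro π h1
      rw [← measure_univ (μ := η), ← h1, Measure.map_apply measurable_fst MeasurableSet.univ]
      simp
    apply le_antisymm
    · rw [add_comm, W, W, ENNReal.add_iInf₂]
      refine le_iInf₂ fun π hπ => ?_
      have m : Measurable (Prod.map id (push p e c) :
        (ℝ × ℝ) × (ℝ × ℝ) → (ℝ × ℝ) × (ℝ × ℝ)) := measurable_id.prodMap mD
      refine (W_le (π := π.map (Prod.map id (push p e c))) ?_ ?_).trans ?_
      · rw [Measure.map_map measurable_fst m, ← hπ.1]; rfl
      · rw [Measure.map_map measurable_snd m, ← hπ.2, Measure.map_map mD measurable_snd]; rfl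
      · rw [lintegral_map (by fun_prop) m]
        have : ∫⁻ a, edist (Prod.map id (push p e c) a).1 (Prod.map id (push p e c) a).2 ∂π
            = ∫⁻ a, (1 + edist a.1 a.2) ∂π := by
          refine lintegral_congr_ae ?_
          filter_upwards [hl' π hπ.1] with a ha
          simp only [Prod.map_fst, Prod.map_snd, id]
          rw [edist_push hc ha, add_comm]
        rw [this, lintegral_add_left measurable_const]
        simp [hu π hπ.1]
    · refine le_W fun π hπ1 hπ2 => ?_
      have m : Measurable (Prod.map id (pull p e c) :
        (ℝ × ℝ) × (ℝ × ℝ) → (ℝ × ℝ) × (ℝ × ℝ)) := measurable_id.prodMap mD'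
      have hb : ∀ᵐ a ∂π, push p e c (pull p e c a.2) = a.2 := by
        have : ∀ᵐ b ∂(π.map Prod.snd), push p e c (pull p e c b) = b := by
          rw [hπ2, ae_map_iff (p := fun b => push p e c (pull p e c b) = b) mD.aemeasurable
            (measurableSet_eq_fun (mD.comp mD') measurable_id)]
          exact Filter.Eventually.of_forall fun z => by rw [pull_push hc]
        exact ae_of_ae_map measurable_snd.aemeasurable this
      have : ∫⁻ a, edist a.1 a.2 ∂π = ∫⁻ a, (edist a.1 (pull p e c a.2) + 1) ∂π := by
        refine lintegral_congr_ae ?_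
        filter_upwards [hl' π hπ1, hb] with a ha hb
        rw [← edist_push hc ha, hb]
      rw [this, lintegral_add_right _ measurable_const, lintegral_const, hu π hπ1, one_mul]
      gcongr
      refine (W_le (π := π.map (Prod.map id (pull p e c))) ?_ ?_).trans ?_
      · rw [Measure.map_map measurable_fst m, ← hπ1]; rfl
      · rw [Measure.map_map measurable_snd m]
        have : Prod.snd ∘ (Prod.map id (pull p e c) :
          (ℝ × ℝ) × (ℝ × ℝ) → (ℝ × ℝ) × (ℝ × ℝ)) = pull p e c ∘ Prod.snd := rfl
        rw [this, ← Measure.map_map mD' measurable_snd, hπ2, Measure.map_map mD' mD]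
        have : pull p e c ∘ push p e c = id := funext fun z => pull_push hc c z
        rw [this, Measure.map_id]
      · rw [lintegral_map (by fun_prop) m]; rfl
  have h2 : W ν (ν.map (push p e c)) = 1 := by
    apply le_antisymm
    · have m : Measurable fun z => (z, push p e c z) := measurable_id.prodMk mD
      refine (W_le (π := ν.map fun z => (z, push p e c z)) ?_ ?_).trans ?_
      · rw [Measure.map_map measurable_fst m]; exact Measure.map_id
      · rw [Measure.map_map measurable_snd m]; rfl
      · rw [lintegral_map (by fun_prop) m]
        simp [edist_self_push hc]
    · have mp := hc.cp.measurable
      have mf : Measurable fun z => ENNReal.ofReal |p z - c| := by fun_prop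
      have key := W_lip (μ := ν) (ν := ν.map (push p e c)) (f := fun z => ENNReal.ofReal |p z - c|)
        mf (by
          intro a b
          rw [edist_dist, ← ENNReal.ofReal_add (abs_nonneg _) dist_nonneg, hc.dist_eq]
          apply ENNReal.ofReal_le_ofReal
          have := abs_sub_le (p b) (p a) c
          have := abs_sub_comm (p a) (p b)
          have := abs_nonneg (q a - q b)
          linarith)
      rw [lintegral_map mf mD] at key
      simp only [abs_push hc] at key
      have e1 : ∀ z, ENNReal.ofReal (|p z - c| + 1) = ENNReal.ofReal |p z - c| + 1 := fun z => by
        rw [ENNReal.ofReal_add (abs_nonneg _) zero_le_one]; simp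
      simp only [e1] at key
      rw [lintegral_add_left mf, lintegral_const, measure_univ, one_mul] at key
      refine (ENNReal.add_le_add_iff_left ?_).1 key
      refine ((lintegral_mono (g := fun z => edist z (c • e)) fun z => ?_).trans_lt
        (moment_fin hν _)).ne
      simp only [edist_dist, hc.dist_eq]
      apply ENNReal.ofReal_le_ofReal
      have : p (c • e) = c := by simpa [hc.p0] using hc.pe 0 c
      rw [this]
      have := abs_nonneg (q z - q (c • e))
      linarith
  have f := W_fin hη hν
  refine ⟨_, hζ, ?_, ?_⟩
  · intro h
    rw [h] at h1
    have := ENNReal.lt_add_right f.ne one_ne_zero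
    exact this.ne h1
  · rw [Wdist_eq, Wdist_eq, Wdist_eq, h1, h2, ENNReal.toReal_add f.ne ENNReal.one_ne_top]
end push

lemma eq_dirac {μ : Measure (ℝ × ℝ)} [IsProbabilityMeasure μ] {y : ℝ × ℝ}
    (h1 : ∀ᵐ z ∂μ, U z = U y) (h2 : ∀ᵐ z ∂μ, V z = V y) : μ = Measure.dirac y := by
  have : (id : ℝ × ℝ → ℝ × ℝ) =ᵐ[μ] fun _ => y := by
    filter_upwards [h1, h2] with z h1 h2 using UV_inj h1 h2
  calc μ = μ.map id := Measure.map_id.symm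
    _ = μ.map fun _ => y := Measure.map_congr this
    _ = Measure.dirac y := by simp

lemma exists_UV (s t : ℝ) : ∃ y : ℝ × ℝ, U y = s ∧ V y = t :=
  ⟨(s + t, s - t), by simp [U], by simp [V]⟩

def OnLine (μ : Measure (ℝ × ℝ)) : Prop :=
  (∃ c, ∀ᵐ z ∂μ, U z = c) ∨ (∃ c, ∀ᵐ z ∂μ, V z = c)

lemma PE_iff {μ : Measure (ℝ × ℝ)} (hμ : μ ∈ WS) : PE μ ↔ OnLine μ := by
  have := (mem_WS.1 hμ).1
  constructor
  · intro h
    by_contra hn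
    rw [OnLine, not_or] at hn
    obtain ⟨s, hs⟩ : ∃ s, Split μ U s := by
      by_contra hh
      exact hn.1 (const_of_not_split (not_exists.1 hh))
    obtain ⟨t, ht⟩ : ∃ s, Split μ V s := by
      by_contra hh
      exact hn.2 (const_of_not_split (not_exists.1 hh))
    obtain ⟨y, rfl, rfl⟩ := exists_UV s t
    obtain ⟨ζ, hζ, hne, he⟩ := h _ (dirac_mem y)
    have := (mem_WS.1 hζ).1
    exact hne (eq_dirac (ext_split hμ hζ y he coordUV hs) (ext_split hμ hζ y he coordVU ht))
  · rintro (⟨c, hc⟩ | ⟨c, hc⟩)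
    · exact line_PE coordUV hμ hc
    · exact line_PE coordVU hμ hc

lemma dirac_of_PD {μ : Measure (ℝ × ℝ)} (hμ : μ ∈ WS) (h : PD μ) : ∃ y, μ = Measure.dirac y := by
  have := (mem_WS.1 hμ).1
  obtain ⟨s, hs⟩ : ∃ c, ∀ᵐ z ∂μ, U z = c := by
    refine const_of_not_split fun s hs => ?_
    obtain ⟨y, rfl, -⟩ := exists_UV s 0
    obtain ⟨η, hη, hne, he⟩ := h _ (dirac_mem y)
    exact hne ((PE_iff hη).2 (Or.inl ⟨_, ext_split hμ hη y he coordUV hs⟩))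
  obtain ⟨t, ht⟩ : ∃ c, ∀ᵐ z ∂μ, V z = c := by
    refine const_of_not_split fun s hs => ?_
    obtain ⟨y, -, rfl⟩ := exists_UV 0 s
    obtain ⟨η, hη, hne, he⟩ := h _ (dirac_mem y)
    exact hne ((PE_iff hη).2 (Or.inr ⟨_, ext_split hμ hη y he coordVU hs⟩))
  obtain ⟨y, rfl, rfl⟩ := exists_UV s t
  exact ⟨y, eq_dirac hs ht⟩

lemma sg_ne (t : ℝ) : sg t ≠ 0 := by unfold sg; split_ifs <;> norm_num

lemma PD_dirac (x : ℝ × ℝ) : PD (Measure.dirac x) := by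
  intro ν hν
  have pν := (mem_WS.1 hν).1
  set g : ℝ × ℝ → ℝ × ℝ := fun z => push V (1, -1) (V x) (push U (1, 1) (U x) z) with hg
  have mg : Measurable g := (measurable_push coordVU _).comp (measurable_push coordUV _)
  have g1 : ∀ z, edist x (g z) = edist x z + 2 := fun z => by
    simp only [hg]
    rw [edist_push coordVU rfl, edist_push coordUV rfl, add_assoc, one_add_one_eq_two]
  have g2 : ∀ z, edist z (g z) ≤ 2 := fun z => by
    refine (edist_triangle _ (push U (1, 1) (U x) z) _).trans ?_
    simp only [hg]
    rw [edist_self_push coordUV, edist_self_push coordVU, one_add_one_eq_two]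
  have gU : ∀ z, U (g z) ≠ U z := fun z => by
    simp only [hg]
    rw [q_push coordVU, p_push coordUV]
    simpa using sg_ne _
  have gV : ∀ z, V (g z) ≠ V z := fun z => by
    simp only [hg]
    rw [p_push coordVU, q_push coordUV]
    simpa using sg_ne _
  have hgν : ν.map g ∈ WS := map_mem hν mg (C := 2) (by simp) fun z => by
    rw [edist_comm]; exact g2 z
  have pg := (mem_WS.1 hgν).1
  set η : Measure (ℝ × ℝ) := (2⁻¹ : ℝ≥0∞) • ν + (2⁻¹ : ℝ≥0∞) • ν.map g with hη
  have hηW : η ∈ WS := by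
    refine mem_WS.2 ⟨⟨?_⟩, 0, ?_⟩
    · simp [hη, ENNReal.inv_two_add_inv_two]
    · rw [hη, lintegral_add_measure, lintegral_smul_measure, lintegral_smul_measure]
      exact ENNReal.add_lt_top.2 ⟨ENNReal.mul_lt_top (by simp) (moment_fin hν _),
        ENNReal.mul_lt_top (by simp) (moment_fin hgν _)⟩
  have pη := (mem_WS.1 hηW).1
  have hae : ∀ P : ℝ × ℝ → Prop, (∀ᵐ z ∂η, P z) → ∀ᵐ z ∂ν, P z ∧ P (g z) := by
    intro P hP
    rw [hη, ae_add_measure_iff] at hP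
    have a1 := (Measure.ae_ennreal_smul_measure_iff (by simp)).1 hP.1
    have a2 := (Measure.ae_ennreal_smul_measure_iff (by simp)).1 hP.2
    exact a1.and (ae_of_ae_map mg.aemeasurable a2)
  refine ⟨η, hηW, ?_, ?_⟩
  · rw [PE_iff hηW]
    rintro (⟨c, hc⟩ | ⟨c, hc⟩)
    · obtain ⟨z, h1, h2⟩ := (hae _ hc).exists
      exact gU z (h2.trans h1.symm)
    · obtain ⟨z, h1, h2⟩ := (hae _ hc).exists
      exact gV z (h2.trans h1.symm)
  · have hle : W ν η ≤ 1 := by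
      have m1 : Measurable fun z : ℝ × ℝ => (z, z) := measurable_id.prodMk measurable_id
      have m2 : Measurable fun z : ℝ × ℝ => (z, g z) := measurable_id.prodMk mg
      refine (W_le (π := (2⁻¹ : ℝ≥0∞) • ν.map (fun z => (z, z)) +
        (2⁻¹ : ℝ≥0∞) • ν.map (fun z => (z, g z))) ?_ ?_).trans ?_
      · rw [Measure.map_add _ _ measurable_fst, Measure.map_smul, Measure.map_smul,
          Measure.map_map measurable_fst m1, Measure.map_map measurable_fst m2]
        have e1 : Prod.fst ∘ (fun z : ℝ × ℝ => (z, z)) = id := rfl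
        have e2 : Prod.fst ∘ (fun z : ℝ × ℝ => (z, g z)) = id := rfl
        rw [e1, e2, Measure.map_id, ← add_smul, ENNReal.inv_two_add_inv_two, one_smul]
      · rw [Measure.map_add _ _ measurable_snd, Measure.map_smul, Measure.map_smul,
          Measure.map_map measurable_snd m1, Measure.map_map measurable_snd m2]
        have e1 : Prod.snd ∘ (fun z : ℝ × ℝ => (z, z)) = id := rfl
        have e2 : Prod.snd ∘ (fun z : ℝ × ℝ => (z, g z)) = g := rfl
        rw [e1, e2, Measure.map_id]
      · rw [lintegral_add_measure, lintegral_smul_measure, lintegral_smul_measure,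
          lintegral_map (by fun_prop) m1, lintegral_map (by fun_prop) m2]
        have : ∫⁻ z, edist z (g z) ∂ν ≤ 2 := by
          refine (lintegral_mono g2).trans ?_
          simp
        simp only [edist_self, lintegral_zero, smul_eq_mul, mul_zero, zero_add]
        calc (2⁻¹ : ℝ≥0∞) * ∫⁻ z, edist z (g z) ∂ν ≤ 2⁻¹ * 2 := by gcongr
          _ = 1 := ENNReal.inv_mul_cancel (by simp) (by simp)
    have hge : W (Measure.dirac x) η = W (Measure.dirac x) ν + 1 := by
      rw [W_dirac_left, W_dirac_left, hη, lintegral_add_measure, lintegral_smul_measure,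
        lintegral_smul_measure, lintegral_map (by fun_prop) mg]
      simp only [g1]
      rw [lintegral_add_left (by fun_prop), lintegral_const, measure_univ, mul_one]
      simp only [smul_eq_mul]
      rw [mul_add, ← add_assoc, ← add_mul, ENNReal.inv_two_add_inv_two, one_mul,
        ENNReal.inv_mul_cancel (by simp) (by simp)]
    have hlip : W (Measure.dirac x) η ≤ W (Measure.dirac x) ν + W ν η := by
      rw [W_dirac_left, W_dirac_left]
      exact W_lip (by fun_prop) fun a b => edist_triangle _ _ _
    have : W (Measure.dirac x) η = W (Measure.dirac x) ν + W ν η :=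
      le_antisymm hlip (by rw [hge]; gcongr)
    rw [Wdist_eq, Wdist_eq, Wdist_eq, this,
      ENNReal.toReal_add (W_fin (dirac_mem x) hν).ne (W_fin hν hηW).ne]

section potential
variable {p q : ℝ × ℝ → ℝ} {e : ℝ × ℝ}

lemma integrable_dist {μ : Measure (ℝ × ℝ)} (hμ : μ ∈ WS) (y : ℝ × ℝ) :
    Integrable (fun z => dist z y) μ := by
  refine ⟨by fun_prop, ?_⟩
  have := moment_fin hμ y
  rw [hasFiniteIntegral_iff_norm]
  simpa [edist_dist, abs_of_nonneg] using this

lemma integrable_p (hc : Coord p q e) {μ : Measure (ℝ × ℝ)} (hμ : μ ∈ WS) (s : ℝ) :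
    Integrable (fun z => |p z - s|) μ := by
  have hp := hc.cp
  refine (integrable_dist hμ (s • e)).mono' (by fun_prop) (Filter.Eventually.of_forall fun z => ?_)
  have : p (s • e) = s := by simpa [hc.p0] using hc.pe 0 s
  rw [hc.dist_eq, this]
  have := abs_nonneg (q z - q (s • e))
  simp only [Real.norm_eq_abs, abs_abs]
  linarith

lemma integrable_q (hc : Coord p q e) (hs : ∀ s t, ∃ y, p y = s ∧ q y = t)
    {μ : Measure (ℝ × ℝ)} (hμ : μ ∈ WS) (s : ℝ) :
    Integrable (fun z => |q z - s|) μ := by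
  have hq := hc.cq
  obtain ⟨y, -, rfl⟩ := hs 0 s
  refine (integrable_dist hμ y).mono' (by fun_prop) (Filter.Eventually.of_forall fun z => ?_)
  rw [hc.dist_eq]
  have := abs_nonneg (p z - p y)
  simp only [Real.norm_eq_abs, abs_abs]
  linarith

lemma cdf_lim (hc : Coord p q e) {μ : Measure (ℝ × ℝ)} (hμ : μ ∈ WS) (s : ℝ) :
    Filter.Tendsto (fun n : ℕ => ((n : ℝ) + 1) *
      ((∫ z, |p z - (s + 1 / ((n : ℝ) + 1))| ∂μ) - ∫ z, |p z - s| ∂μ)) Filter.atTop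
      (nhds (2 * μ.real {z | p z ≤ s} - 1)) := by
  have hp := hc.cp
  have := (mem_WS.1 hμ).1
  have hms : MeasurableSet {z | p z ≤ s} := (isClosed_le hp continuous_const).measurableSet
  have hlim : 2 * μ.real {z | p z ≤ s} - 1
      = ∫ z, (2 * ({z | p z ≤ s}.indicator (fun _ => (1 : ℝ)) z) - 1) ∂μ := by
    rw [integral_sub, integral_const_mul, integral_indicator_const _ hms]
    · simp
    · exact ((integrable_const _).indicator hms).const_mul _
    · exact integrable_const _
  rw [hlim]
  have heq : ∀ n : ℕ, ((n : ℝ) + 1) *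
      ((∫ z, |p z - (s + 1 / ((n : ℝ) + 1))| ∂μ) - ∫ z, |p z - s| ∂μ)
      = ∫ z, ((n : ℝ) + 1) * (|p z - (s + 1 / ((n : ℝ) + 1))| - |p z - s|) ∂μ := by
    intro n
    rw [integral_const_mul, integral_sub (integrable_p hc hμ _) (integrable_p hc hμ _)]
  simp only [heq]
  refine tendsto_integral_of_dominated_convergence (fun _ => 1) (fun n => by fun_prop)
    (integrable_const _) (fun n => Filter.Eventually.of_forall fun z => ?_)
    (Filter.Eventually.of_forall fun z => ?_)
  · have hn : (0 : ℝ) < (n : ℝ) + 1 := by positivity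
    rw [Real.norm_eq_abs, abs_mul, abs_of_pos hn]
    have h1 : |(|p z - (s + 1 / ((n : ℝ) + 1))| - |p z - s|)| ≤ 1 / ((n : ℝ) + 1) := by
      refine (abs_abs_sub_abs_le_abs_sub _ _).trans ?_
      have : p z - (s + 1 / ((n : ℝ) + 1)) - (p z - s) = -(1 / ((n : ℝ) + 1)) := by ring
      rw [this, abs_neg, abs_of_pos (by positivity)]
    calc _ ≤ ((n : ℝ) + 1) * (1 / ((n : ℝ) + 1)) := by gcongr
      _ = 1 := by field_simp
  · by_cases h : p z ≤ s
    · have : ∀ n : ℕ, ((n : ℝ) + 1) * (|p z - (s + 1 / ((n : ℝ) + 1))| - |p z - s|) = 1 := by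
        intro n
        have hn : (0 : ℝ) < 1 / ((n : ℝ) + 1) := by positivity
        rw [abs_of_nonpos (by linarith), abs_of_nonpos (by linarith)]
        field_simp
        ring
      simp only [this]
      rw [Set.indicator_of_mem (by exact h)]
      norm_num
    · rw [Set.indicator_of_notMem (by exact h)]
      push Not at h
      obtain ⟨N, hN⟩ := exists_nat_one_div_lt (sub_pos.2 h)
      refine tendsto_const_nhds.congr' ?_
      filter_upwards [Filter.eventually_ge_atTop N] with n hn
      have h1 : 1 / ((n : ℝ) + 1) ≤ 1 / ((N : ℝ) + 1) := by gcongr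
      have hn : (0 : ℝ) < 1 / ((n : ℝ) + 1) := by positivity
      rw [abs_of_nonneg (by linarith), abs_of_nonneg (by linarith)]
      field_simp
      ring

lemma determined (hc : Coord p q e) (hs : ∀ s t, ∃ y, p y = s ∧ q y = t)
    {μ ν : Measure (ℝ × ℝ)} (hμ : μ ∈ WS) (hν : ν ∈ WS)
    (hpot : ∀ y, ∫ z, dist z y ∂ν = ∫ z, dist z y ∂μ) (hq0 : ∀ᵐ z ∂μ, q z = 0) : ν = μ := by
  have hp := hc.cp
  have hq := hc.cq
  have := (mem_WS.1 hμ).1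
  have := (mem_WS.1 hν).1
  have hsum : ∀ s t, (∫ z, |p z - s| ∂ν) + ∫ z, |q z - t| ∂ν = (∫ z, |p z - s| ∂μ) + |t| := by
    intro s t
    obtain ⟨y, rfl, rfl⟩ := hs s t
    have h1 := hpot y
    simp only [hc.dist_eq] at h1
    rw [integral_add (integrable_p hc hν _) (integrable_q hc hs hν _),
      integral_add (integrable_p hc hμ _) (integrable_q hc hs hμ _)] at h1
    rw [h1]
    congr 1
    have : (fun z => |q z - q y|) =ᵐ[μ] fun _ => |q y| := by
      filter_upwards [hq0] with z hz
      rw [hz]; simp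
    rw [integral_congr_ae this]; simp
  set K := (∫ z, |p z - 0| ∂μ) - ∫ z, |p z - 0| ∂ν with hK
  have hG : ∀ t, ∫ z, |q z - t| ∂ν = |t| + K := fun t => by
    have := hsum 0 t
    linarith
  have hlim : Filter.Tendsto (fun n : ℕ => ∫ z, (|q z - n| + |q z - (-n)| - 2 * n) ∂ν)
      Filter.atTop (nhds (∫ _, (0 : ℝ) ∂ν)) := by
    refine tendsto_integral_of_dominated_convergence (fun z => 2 * |q z - 0|)
      (fun n => by fun_prop) ((integrable_q hc hs hν 0).const_mul 2)
      (fun n => Filter.Eventually.of_forall fun z => ?_)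
      (Filter.Eventually.of_forall fun z => ?_)
    · have hn : (0 : ℝ) ≤ n := by positivity
      rw [Real.norm_eq_abs]
      have t1 := abs_sub_le (q z) 0 (n : ℝ)
      have t2 := abs_sub_le (q z) 0 (-(n : ℝ))
      have t3 := le_abs_self (q z - -(n : ℝ))
      have t4 := neg_abs_le (q z - (n : ℝ))
      have t5 : |0 - (n : ℝ)| = n := by simp
      have t6 : |0 - -(n : ℝ)| = n := by simp
      rw [abs_of_nonneg (by linarith)]
      linarith
    · obtain ⟨N, hN⟩ := exists_nat_ge |q z|
      refine tendsto_const_nhds.congr' ?_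
      filter_upwards [Filter.eventually_ge_atTop N] with n hn
      have hn' : (N : ℝ) ≤ n := by exact_mod_cast hn
      have := abs_le.1 hN
      rw [abs_of_nonpos (by linarith), abs_of_nonneg (by linarith)]
      ring
  have hval : ∀ n : ℕ, ∫ z, (|q z - n| + |q z - (-n)| - 2 * n) ∂ν = 2 * K := by
    intro n
    have hi : Integrable (fun z => |q z - (n : ℝ)| + |q z - (-(n : ℝ))|) ν :=
      (integrable_q hc hs hν _).add (integrable_q hc hs hν _)
    rw [integral_sub hi (integrable_const _), integral_add (integrable_q hc hs hν _) (integrable_q hc hs hν _),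
      hG, hG]
    simp
    ring
  simp only [hval, integral_zero] at hlim
  have hK0 : K = 0 := by
    have := tendsto_nhds_unique tendsto_const_nhds hlim
    linarith
  have hqν : ∀ᵐ z ∂ν, q z = 0 := by
    have h0 := hG 0
    rw [hK0, abs_zero, add_zero,
      integral_eq_zero_iff_of_nonneg (fun z => abs_nonneg _) (integrable_q hc hs hν 0)] at h0
    filter_upwards [h0] with z hz
    simpa using hz
  have hF : ∀ s, ∫ z, |p z - s| ∂ν = ∫ z, |p z - s| ∂μ := by
    intro s
    have h1 := hsum s 0
    rw [hG 0, hK0] at h1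
    linarith
  have hmap : ν.map p = μ.map p := by
    have := Measure.isProbabilityMeasure_map (μ := ν) hp.measurable.aemeasurable
    have := Measure.isProbabilityMeasure_map (μ := μ) hp.measurable.aemeasurable
    refine Measure.ext_of_Iic _ _ fun s => ?_
    rw [Measure.map_apply hp.measurable measurableSet_Iic,
      Measure.map_apply hp.measurable measurableSet_Iic]
    have l1 := cdf_lim hc hν s
    have l2 := cdf_lim hc hμ s
    simp only [hF] at l1
    have h3 := tendsto_nhds_unique l1 l2
    have h4 : ν.real {z | p z ≤ s} = μ.real {z | p z ≤ s} := by linarith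
    exact (measureReal_eq_measureReal_iff).1 h4
  have hrec : ∀ ρ : Measure (ℝ × ℝ), (∀ᵐ z ∂ρ, q z = 0) →
      ρ = (ρ.map p).map (fun s : ℝ => s • e) := by
    intro ρ hρ
    rw [Measure.map_map (by fun_prop) hp.measurable]
    have : (id : ℝ × ℝ → ℝ × ℝ) =ᵐ[ρ] (fun s : ℝ => s • e) ∘ p := by
      filter_upwards [hρ] with z hz
      have h1 : p (p z • e) = p z := by simpa [hc.p0] using hc.pe 0 (p z)
      have h2 : q (p z • e) = 0 := by simpa [hc.q0] using hc.qe 0 (p z)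
      simp only [id, Function.comp]
      rw [← dist_eq_zero, hc.dist_eq, h1, h2, hz]
      simp
    rw [← Measure.map_congr this, Measure.map_id]
  rw [hrec ν hqν, hrec μ hq0, hmap]
end potential

lemma ae_of_msupport {μ : Measure (ℝ × ℝ)} {S : Set (ℝ × ℝ)} (h : msupport μ ⊆ S) :
    ∀ᵐ z ∂μ, z ∈ S := by
  rw [ae_iff]
  refine measure_null_of_locally_null _ fun x hx => ?_
  have hx' : x ∉ msupport μ := fun hh => hx (h hh)
  simp only [msupport, Set.mem_ofPred_eq, not_forall, not_not] at hx'
  obtain ⟨O, hO, hxO, h0⟩ := hx'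
  exact ⟨O, mem_nhdsWithin_of_mem_nhds (hO.mem_nhds hxO), h0⟩

lemma Wdist_dirac_right {μ : Measure (ℝ × ℝ)} (hμ : μ ∈ WS) (y : ℝ × ℝ) :
    Wdist 1 μ (Measure.dirac y) = ∫ z, dist z y ∂μ := by
  have := (mem_WS.1 hμ).1
  rw [Wdist_eq, W_dirac_right, integral_eq_lintegral_of_nonneg_ae
    (Filter.Eventually.of_forall fun z => dist_nonneg) (by fun_prop)]
  simp only [edist_dist]

lemma dirac_dist (x y : ℝ × ℝ) :
    Wdist 1 (Measure.dirac x) (Measure.dirac y) = dist x y := by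
  rw [Wdist_dirac_right (dirac_mem x)]
  exact integral_dirac _ _

theorem main (Φ : Measure (ℝ × ℝ) → Measure (ℝ × ℝ))
    (hΦ : IsWIsometry (ℝ × ℝ) 1 Φ) :
    ∃ T : ℝ × ℝ → ℝ × ℝ, IsIsom T ∧ ∀ μ ∈ WSet (ℝ × ℝ) 1,
      (msupport μ ⊆ Lplus ∨ msupport μ ⊆ Lminus) → Φ (μ.map T) = μ := by
  have hdirac : ∀ x, ∃ y, Φ (Measure.dirac x) = Measure.dirac y := fun x =>
    dirac_of_PD (hΦ.1.1 (dirac_mem x)) ((PD_inv hΦ (dirac_mem x)).2 (PD_dirac x))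
  have hdirac' : ∀ y, ∃ x, Φ (Measure.dirac x) = Measure.dirac y := fun y => by
    obtain ⟨μ, hμ, he⟩ := hΦ.1.2.2 (dirac_mem y)
    have : PD μ := (PD_inv hΦ hμ).1 (by rw [he]; exact PD_dirac y)
    obtain ⟨x, rfl⟩ := dirac_of_PD hμ this
    exact ⟨x, he⟩
  choose T hT using hdirac'
  have hTd : ∀ x y, dist (T x) (T y) = dist x y := fun x y => by
    rw [← dirac_dist, ← hΦ.2 _ (dirac_mem _) _ (dirac_mem _), hT, hT, dirac_dist]
  have hTi : Isometry T := Isometry.of_dist_eq hTd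
  refine ⟨T, ⟨⟨hTi.injective, fun x => ?_⟩, hTd⟩, fun μ hμ hsupp => ?_⟩
  · obtain ⟨y, hy⟩ := hdirac x
    refine ⟨y, ?_⟩
    rw [← dist_eq_zero, ← dirac_dist, ← hΦ.2 _ (dirac_mem _) _ (dirac_mem _), hT, hy, dirac_dist,
      dist_self]
  · have pμ := (mem_WS.1 hμ).1
    have mT : Measurable T := hTi.continuous.measurable
    have hTμ : μ.map T ∈ WS := by
      refine mem_WS.2 ⟨Measure.isProbabilityMeasure_map mT.aemeasurable, T 0, ?_⟩
      rw [lintegral_map (by fun_prop) mT]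
      simp only [hTi.edist_eq]
      exact moment_fin hμ 0
    have hpot : ∀ y, ∫ z, dist z y ∂(Φ (μ.map T)) = ∫ z, dist z y ∂μ := by
      intro y
      rw [← Wdist_dirac_right (hΦ.1.1 hTμ), ← hT y, hΦ.2 _ hTμ _ (dirac_mem _),
        Wdist_dirac_right hTμ, integral_map mT.aemeasurable (by fun_prop)]
      simp only [hTd]
    rcases hsupp with h | h
    · refine determined coordUV exists_UV hμ (hΦ.1.1 hTμ) hpot ?_
      filter_upwards [ae_of_msupport h] with z hz
      have : z.2 = z.1 := hz
      simp [V, this]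
    · refine determined coordVU (fun s t => ?_) hμ (hΦ.1.1 hTμ) hpot ?_
      · obtain ⟨y, h1, h2⟩ := exists_UV t s
        exact ⟨y, h2, h1⟩
      · filter_upwards [ae_of_msupport h] with z hz
        have : z.2 = -z.1 := hz
        simp [U, this]

end DiagRigid

/-- Diagonal rigidity of `𝒲₁(ℝ², d_m)`: every isometry, composed with the push-forward
of a suitable isometry of the base, fixes all measures supported on `L₊` or `L₋`. -/
theorem W1_R2_diagonally_rigid (Φ : Measure (ℝ × ℝ) → Measure (ℝ × ℝ))
    (hΦ : IsWIsometry (ℝ × ℝ) 1 Φ) :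
    ∃ T : ℝ × ℝ → ℝ × ℝ, IsIsom T ∧ ∀ μ ∈ WSet (ℝ × ℝ) 1,
      (msupport μ ⊆ Lplus ∨ msupport μ ⊆ Lminus) → Φ (μ.map T) = μ := by
  exact DiagRigid.main Φ hΦ
end
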